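/- arXiv:2106.00395 — 3 statements merged into one kernel-verified Lean document; each statement's English description precedes it below -/
import Mathlib

section
/- Let n ≥ 3 and V ≥ 3 be odd integers with (n, V) ≠ (5, 3). Then the class number of the imaginary quadratic field ℚ(√(1 − V^n)) is divisible by n. -/
/-- The quadratic field `ℚ(√d)`, realized as the subfield of `ℂ` generated over `ℚ`
by a complex square root of `d`. -/
noncomputable def Qsqrt (d : ℤ) : IntermediateField ℚ ℂ :=
  IntermediateField.adjoin ℚ {((d : ℂ) ^ ((1 : ℂ) / 2))}

/-- The class number of `ℚ(√d)`: the order of the ideal class group of its ring of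
integers. -/
noncomputable def classNumSqrt (d : ℤ) : ℕ :=
  Nat.card (ClassGroup (NumberField.RingOfIntegers (Qsqrt d)))

/-!
Let `d = 1 - V ^ n`. In `(1 + √d)(1 - √d) = V ^ n` the factors are coprime because `d` is even, so
the ideal `(1 + √d)` is an `n`-th power `I ^ n`, and the class of `I` has order `n` unless
`1 + √d = z ^ p e` for some prime `p ∣ n`, integer `z ∈ ℚ(√d)` and unit `e`. The order of `e`
divides `4` or `6`, and a parity argument excludes primitive third and sixth roots of unity when
`p = 3`, so `e` is itself a `p`-th power and we may take `e = 1`. Let `T` and `N` be the trace and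
norm of `z`. Then `T` divides `z ^ p + z̄ ^ p = 2`, and `T ^ p ≡ 2` modulo `p N` leaves only
`T = 2`. As `z` has discriminant `4 (1 - N)` and `N ^ p = 1 - d`, the quotient
`(N ^ p - 1) / (N - 1)` is a square, whence `N = 3` and `p = 5` by the Nagell–Ljunggren theorem,
that is, `V ^ n = 3 ^ 5`.

For Nagell–Ljunggren, a square `q² = (x ^ (2k + 1) - 1) / (x - 1)` gives
`x (x ^ k)² - (x - 1) q² = 1`, so `x ^ k` is a term `U_I` of a Pell sequence. A prime `2i + 1`
dividing `x` also divides `2I + 1`, so `U_i` divides `U_I = x ^ k` and is thus a power of `2i + 1`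
which is at least its square; the expansion of `U_i` modulo `x²` allows this only if `i = 1`, and
then `U_1 = 4x - 3` shows `9 ∤ x`. Hence `x = 3`, and `k < 3` because `27 ∣ U_I` implies
`17 ∣ U_I`.
-/

section Pell

/-- The fundamental solution `(2x - 1, 2)` of the Pell equation `a² - x(x - 1)b² = 1`. -/
def pellUnit (x : ℤ) : Pell.Solution₁ (x * (x - 1)) :=
  Pell.Solution₁.mk (2 * x - 1) 2 (by ring)

/-- The coefficient `Uᵢ` in `(√x + √(x - 1)) ^ (2i + 1) = Uᵢ √x + Wᵢ √(x - 1)`, which runs through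
the first coordinates of the solutions of `x U² - (x - 1) W² = 1`. Since
`(√x + √(x - 1))² = 2x - 1 + 2 √(x(x - 1))`, it is read off the powers of `pellUnit x`. -/
def pellU (x : ℤ) (i : ℕ) : ℤ :=
  (pellUnit x ^ i).x + (x - 1) * (pellUnit x ^ i).y

/-- The coefficient `Wᵢ` in `(√x + √(x - 1)) ^ (2i + 1) = Uᵢ √x + Wᵢ √(x - 1)`. -/
def pellW (x : ℤ) (i : ℕ) : ℤ :=
  (pellUnit x ^ i).x + x * (pellUnit x ^ i).y

variable {x : ℤ}

lemma pellU_zero (x : ℤ) : pellU x 0 = 1 := by simp [pellU]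

lemma pellW_zero (x : ℤ) : pellW x 0 = 1 := by simp [pellW]

lemma pellU_add (x : ℤ) (i m : ℕ) :
    pellU x (i + m) =
      (pellUnit x ^ m).x * pellU x i + (x - 1) * (pellUnit x ^ m).y * pellW x i := by
  simp only [pellU, pellW, pow_add, Pell.Solution₁.x_mul, Pell.Solution₁.y_mul]
  ring

lemma pellW_add (x : ℤ) (i m : ℕ) :
    pellW x (i + m) = (pellUnit x ^ m).x * pellW x i + x * (pellUnit x ^ m).y * pellU x i := by
  simp only [pellU, pellW, pow_add, Pell.Solution₁.x_mul, Pell.Solution₁.y_mul]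
  ring

lemma pellU_succ (x : ℤ) (i : ℕ) :
    pellU x (i + 1) = (2 * x - 1) * pellU x i + 2 * (x - 1) * pellW x i := by
  rw [pellU_add, pow_one, pellUnit, Pell.Solution₁.x_mk, Pell.Solution₁.y_mk]
  ring

lemma pellW_succ (x : ℤ) (i : ℕ) :
    pellW x (i + 1) = (2 * x - 1) * pellW x i + 2 * x * pellU x i := by
  rw [pellW_add, pow_one, pellUnit, Pell.Solution₁.x_mk, Pell.Solution₁.y_mk]
  ring

lemma pellUnit_pow_odd_x (x : ℤ) (i : ℕ) :
    (pellUnit x ^ (2 * i + 1)).x = 2 * x * pellU x i ^ 2 - 1 := by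
  have hpell := (pellUnit x ^ i).prop
  simp only [pow_succ, pow_mul', pow_zero, one_mul, pellU, Pell.Solution₁.x_mul,
    Pell.Solution₁.y_mul]
  simp only [pellUnit, Pell.Solution₁.x_mk, Pell.Solution₁.y_mk] at hpell ⊢
  linear_combination -hpell

lemma pellUnit_pow_odd_y (x : ℤ) (i : ℕ) :
    (pellUnit x ^ (2 * i + 1)).y = 2 * pellU x i * pellW x i := by
  simp only [pow_succ, pow_mul', pow_zero, one_mul, pellU, pellW, Pell.Solution₁.x_mul,
    Pell.Solution₁.y_mul]
  simp only [pellUnit, Pell.Solution₁.x_mk, Pell.Solution₁.y_mk]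
  ring

lemma pellU_dvd (x : ℤ) (i t : ℕ) : pellU x i ∣ pellU x (i + (2 * i + 1) * t) := by
  induction t with
  | zero => simp
  | succ t ih =>
    rw [mul_add_one, ← add_assoc, pellU_add, pellUnit_pow_odd_y]
    exact dvd_add (ih.mul_left _)
      (((((dvd_refl _).mul_left 2).mul_right _).mul_left _).mul_right _)

lemma isFundamental_pellUnit (hx : 1 < x) : Pell.IsFundamental (pellUnit x) := by
  refine ⟨?_, ?_, fun {a} ha => ?_⟩
  · rw [pellUnit, Pell.Solution₁.x_mk]; omega
  · rw [pellUnit, Pell.Solution₁.y_mk]; norm_num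
  · have hpell := a.prop_x
    rw [pellUnit, Pell.Solution₁.x_mk]
    by_contra! hlt
    have hy : |a.y| < 2 := by
      have hsq : a.x ^ 2 < (2 * x - 1) ^ 2 := by gcongr
      rw [← abs_two, ← sq_lt_sq]
      by_contra! hy
      nlinarith
    obtain h | h : a.y ^ 2 = 0 ∨ a.y ^ 2 = 1 := by
      rw [abs_lt] at hy
      obtain h | h | h : a.y = 0 ∨ a.y = 1 ∨ a.y = -1 := by omega
      all_goals simp [h]
    · rw [h] at hpell
      nlinarith
    · rw [h] at hpell
      have hax : a.x < x := by nlinarith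
      nlinarith

lemma pellU_pellW_lower_bound (hx : 1 < x) (i : ℕ) :
    4 * (i : ℤ) + 1 ≤ pellU x i ∧ 1 ≤ pellW x i := by
  induction i with
  | zero => simp [pellU_zero, pellW_zero]
  | succ i ih =>
    obtain ⟨hU, hW⟩ := ih
    rw [pellU_succ, pellW_succ]
    push_cast
    constructor <;> nlinarith

lemma exists_eq_pellU (hx : 1 < x) {u w : ℤ} (hu : 0 < u) (hw : 0 < w)
    (h : x * u ^ 2 - (x - 1) * w ^ 2 = 1) : ∃ i, u = pellU x i := by
  let a : Pell.Solution₁ (x * (x - 1)) :=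
    Pell.Solution₁.mk (2 * x * u ^ 2 - 1) (2 * u * w) (by linear_combination 4 * x * u ^ 2 * h)
  have hax : a.x = 2 * x * u ^ 2 - 1 := Pell.Solution₁.x_mk ..
  have hay : a.y = 2 * u * w := Pell.Solution₁.y_mk ..
  obtain ⟨n, hn⟩ := (isFundamental_pellUnit hx).eq_pow_of_nonneg (a := a)
    (by rw [hax]; nlinarith [pow_pos hu 2]) (by rw [hay]; positivity)
  rw [hn] at hax
  obtain ⟨i, rfl | rfl⟩ := n.even_or_odd'
  · have hpell := (pellUnit x ^ i).prop
    rw [two_mul, pow_add, Pell.Solution₁.x_mul] at hax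
    have hdvd : x ∣ 1 := ⟨u ^ 2 - (x - 1) * (pellUnit x ^ i).y ^ 2, by linarith⟩
    exact absurd (Int.le_of_dvd one_pos hdvd) (by omega)
  · rw [pellUnit_pow_odd_x] at hax
    have hsq : u ^ 2 = pellU x i ^ 2 := by
      have : 2 * x * (u ^ 2 - pellU x i ^ 2) = 0 := by linarith
      rcases mul_eq_zero.1 this with h0 | h0 <;> omega
    have := (pellU_pellW_lower_bound hx i).1
    exact ⟨i, (pow_left_inj₀ hu.le (by omega) two_ne_zero).1 hsq⟩

lemma dvd_pellW_sub (x : ℤ) (i : ℕ) : x ∣ pellW x i - (-1) ^ i := by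
  induction i with
  | zero => simp [pellW_zero]
  | succ i ih =>
    obtain ⟨c, hc⟩ := ih
    rw [pellW_succ]
    exact ⟨2 * pellW x i - c + 2 * pellU x i, by linear_combination -hc⟩

lemma dvd_pellU_sub (x : ℤ) (i : ℕ) : x ∣ pellU x i - (-1) ^ i * (2 * i + 1) := by
  induction i with
  | zero => simp [pellU_zero]
  | succ i ih =>
    obtain ⟨c, hc⟩ := ih
    obtain ⟨d, hd⟩ := dvd_pellW_sub x i
    rw [pellU_succ]
    push_cast
    exact ⟨2 * pellU x i + 2 * pellW x i - c - 2 * d, by linear_combination -hc - 2 * hd⟩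

lemma sq_dvd_pellW_sub (x : ℤ) (i : ℕ) :
    x ^ 2 ∣ pellW x i - (-1) ^ i * (1 - 2 * x * i * (i + 1)) := by
  induction i with
  | zero => simp [pellW_zero]
  | succ i ih =>
    obtain ⟨c, hc⟩ := ih
    obtain ⟨d, hd⟩ := dvd_pellU_sub x i
    rw [pellW_succ]
    push_cast
    exact ⟨(2 * x - 1) * c + 2 * d - (-1) ^ i * 4 * i * (i + 1),
      by linear_combination (2 * x - 1) * hc + 2 * x * hd⟩

/- Modulo `x²`, `pellU x i` is `±(2i + 1)(1 - 2x i(i + 1) / 3)`; the factor `3` clears the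
denominator. -/
lemma sq_dvd_three_mul_pellU_sub (x : ℤ) (i : ℕ) :
    x ^ 2 ∣ 3 * pellU x i - (-1) ^ i * (2 * i + 1) * (3 - 2 * x * i * (i + 1)) := by
  induction i with
  | zero => simp [pellU_zero]
  | succ i ih =>
    obtain ⟨c, hc⟩ := ih
    obtain ⟨d, hd⟩ := sq_dvd_pellW_sub x i
    rw [pellU_succ]
    push_cast
    exact ⟨(2 * x - 1) * c + 6 * (x - 1) * d + (-1) ^ i * (2 * i + 1) * (-4 * i * (i + 1))
        - (-1) ^ i * 12 * i * (i + 1),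
      by linear_combination (2 * x - 1) * hc + 6 * (x - 1) * hd⟩

lemma dvd_of_dvd_pellU {d : ℤ} {i : ℕ} (hdx : d ∣ x) (hdU : d ∣ pellU x i) :
    d ∣ 2 * i + 1 := by
  have hd : d ∣ (-1) ^ i * (2 * i + 1) := by
    simpa using dvd_sub hdU (hdx.trans (dvd_pellU_sub x i))
  rwa [((isUnit_neg_one (α := ℤ)).pow i).dvd_mul_left] at hd

lemma sq_dvd_pellU_of_prime {i : ℕ} (hx : 1 < x) (hq : (2 * i + 1).Prime)
    (hU : ∀ r : ℕ, r.Prime → (r : ℤ) ∣ pellU x i → (r : ℤ) ∣ x) :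
    (2 * i + 1 : ℤ) ^ 2 ∣ pellU x i := by
  have hlower := (pellU_pellW_lower_bound hx i).1
  obtain ⟨u, hu⟩ := Int.eq_ofNat_of_zero_le (a := pellU x i) (by omega)
  have hi : i ≠ 0 := by rintro rfl; exact Nat.not_prime_one hq
  have hpow := Nat.eq_prime_pow_of_unique_prime_dvd (n := u) (p := 2 * i + 1) (by omega) <| by
    intro r hr hru
    have hrU : (r : ℤ) ∣ pellU x i := hu ▸ Int.natCast_dvd_natCast.2 hru
    have hrq := dvd_of_dvd_pellU (hU r hr hrU) hrU
    exact (Nat.prime_dvd_prime_iff_eq hr hq).1 (by exact_mod_cast hrq)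
  have hlen : 2 ≤ u.primeFactorsList.length := by
    by_contra! hlt
    have hle := Nat.pow_le_pow_right hq.pos (Nat.le_of_lt_succ hlt)
    rw [← hpow, pow_one] at hle
    omega
  have hdvd : (2 * i + 1) ^ 2 ∣ u := hpow ▸ pow_dvd_pow _ hlen
  rw [hu]
  exact_mod_cast hdvd

lemma eq_one_of_sq_dvd_pellU {i : ℕ} (hq : (2 * i + 1).Prime) (hqx : (2 * i + 1 : ℤ) ∣ x)
    (hU : (2 * i + 1 : ℤ) ^ 2 ∣ pellU x i) : i = 1 := by
  have hsq : (2 * i + 1 : ℤ) ^ 2 ∣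
      (-1) ^ i * ((2 * i + 1) * (3 - 2 * x * i * (i + 1))) := by
    have := dvd_sub (hU.mul_left 3)
      ((pow_dvd_pow_of_dvd hqx 2).trans (sq_dvd_three_mul_pellU_sub x i))
    rwa [sub_sub_cancel, mul_assoc] at this
  rw [((isUnit_neg_one (α := ℤ)).pow i).dvd_mul_left, sq,
    mul_dvd_mul_iff_left (by positivity)] at hsq
  have h3 : (2 * i + 1 : ℤ) ∣ 3 := by
    simpa using dvd_add hsq (((hqx.mul_left 2).mul_right (i : ℤ)).mul_right (i + 1 : ℤ))
  have := (Nat.prime_dvd_prime_iff_eq hq Nat.prime_three).1 (by exact_mod_cast h3)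
  omega

lemma eq_three_and_not_nine_dvd_of_pellU_eq_pow {I k q : ℕ} (hx : 1 < x) (hk : k ≠ 0)
    (hU : pellU x I = x ^ k) (hq : q.Prime) (hqx : (q : ℤ) ∣ x) : q = 3 ∧ ¬ (9 : ℤ) ∣ x := by
  have hqI : q ∣ 2 * I + 1 := by
    exact_mod_cast dvd_of_dvd_pellU hqx (hU ▸ dvd_pow hqx hk)
  obtain ⟨i, rfl⟩ := Odd.of_dvd_nat ⟨I, rfl⟩ hqI
  obtain ⟨l, hl⟩ := hqI
  obtain ⟨t, rfl⟩ := Odd.of_dvd_nat ⟨I, rfl⟩ (Dvd.intro_left _ hl.symm)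
  obtain rfl : I = i + (2 * i + 1) * t := by linarith
  have hsq := sq_dvd_pellU_of_prime hx hq fun r hr hrU =>
    (Nat.prime_iff_prime_int.1 hr).dvd_of_dvd_pow (hU ▸ hrU.trans (pellU_dvd x i t))
  push_cast at hqx
  obtain rfl := eq_one_of_sq_dvd_pellU hq hqx hsq
  rw [pellU_succ, pellU_zero, pellW_zero] at hsq
  have h9 : (9 : ℤ) ∣ 4 * x - 3 := by
    convert hsq using 1 <;> ring
  refine ⟨by norm_num, fun hx9 => ?_⟩
  have h3 : (9 : ℤ) ∣ 3 := by simpa using dvd_sub (hx9.mul_left 4) h9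
  norm_num at h3

lemma eq_three_of_pellU_eq_pow {I k : ℕ} (hx : 1 < x) (hk : k ≠ 0) (hU : pellU x I = x ^ k) :
    x = 3 := by
  lift x to ℕ using by omega
  have hprime (r : ℕ) (hr : r.Prime) (hrx : r ∣ x) : r = 3 ∧ ¬ 9 ∣ x := by
    exact_mod_cast eq_three_and_not_nine_dvd_of_pellU_eq_pow hx hk hU hr (by exact_mod_cast hrx)
  obtain ⟨q, hq, y, hy⟩ := Nat.exists_prime_and_dvd (n := x) (by omega)
  obtain ⟨rfl, h9⟩ := hprime q hq ⟨y, hy⟩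
  obtain rfl | hy1 := eq_or_ne y 1
  · exact_mod_cast hy
  · obtain ⟨r, hr, hry⟩ := Nat.exists_prime_and_dvd hy1
    obtain ⟨rfl, -⟩ := hprime r hr (hy ▸ hry.mul_left 3)
    exact absurd (hy ▸ Nat.mul_dvd_mul_left 3 hry) h9

lemma pellU_three_add_nine (i : ℕ) : pellU 3 (i + 9) ≡ -pellU 3 i [ZMOD 27] := by
  simp only [pellU_succ, pellW_succ, Int.modEq_iff_dvd]
  ring_nf
  omega

lemma lt_three_of_pellU_three_eq_pow {I k : ℕ} (hU : pellU 3 I = 3 ^ k) : k < 3 := by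
  by_contra! hk
  have hmod (I : ℕ) : (27 : ℤ) ∣ pellU 3 I → I % 9 = 4 := by
    induction I using Nat.strong_induction_on with
    | _ I ih =>
      intro h27
      by_cases h9 : I < 9
      · interval_cases I <;>
          simp [pellU_succ, pellW_succ, pellU_zero, pellW_zero] at h27 ⊢
      · obtain ⟨J, rfl⟩ := Nat.exists_eq_add_of_le' (not_lt.1 h9)
        rw [(pellU_three_add_nine J).dvd_iff, dvd_neg] at h27
        simpa using ih J (by omega) h27
  have h27 : (27 : ℤ) ∣ pellU 3 I := hU ▸ pow_dvd_pow 3 hk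
  obtain ⟨t, rfl⟩ : ∃ t, I = 4 + (2 * 4 + 1) * t := ⟨I / 9, by have := hmod I h27; omega⟩
  have h17 : (17 : ℤ) ∣ pellU 3 4 := by
    norm_num [pellU_succ, pellW_succ, pellU_zero, pellW_zero]
  have h17pow : (17 : ℤ) ∣ 3 ^ k := hU ▸ h17.trans (pellU_dvd 3 4 t)
  have h17three := (by norm_num : Prime (17 : ℤ)).dvd_of_dvd_pow h17pow
  norm_num at h17three

/-- The case of odd exponent of the **Nagell–Ljunggren** theorem. -/
theorem eq_three_and_eq_five_of_geom_sum_eq_sq {p : ℕ} {q : ℤ} (hx : 1 < x) (hpodd : Odd p)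
    (hp : p ≠ 1) (h : ∑ j ∈ Finset.range p, x ^ j = q ^ 2) : x = 3 ∧ p = 5 := by
  obtain ⟨k, rfl⟩ := hpodd
  have hq : q ≠ 0 := by
    have hsum : 0 < q ^ 2 := h ▸ Finset.sum_pos (fun j _ => by positivity) (by simp)
    rintro rfl
    simp at hsum
  have hpell : x * (x ^ k) ^ 2 - (x - 1) * |q| ^ 2 = 1 := by
    rw [sq_abs, ← h]
    linear_combination -geom_sum_mul x (2 * k + 1)
  obtain ⟨I, hI⟩ := exists_eq_pellU hx (by positivity) (abs_pos.2 hq) hpell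
  obtain rfl := eq_three_of_pellU_eq_pow hx (by omega) hI.symm
  have hk3 := lt_three_of_pellU_three_eq_pow hI.symm
  have hk1 : k ≠ 1 := by
    rintro rfl
    have := (pellU_pellW_lower_bound hx I).1
    obtain rfl : I = 0 := by omega
    simp [pellU_zero] at hI
  exact ⟨rfl, by omega⟩

end Pell

section TraceNorm

open ComplexConjugate

lemma exists_int_of_isIntegral_ratCast {q : ℚ} (h : IsIntegral ℤ (q : ℂ)) : ∃ m : ℤ, q = m := by
  have hq : IsIntegral ℤ q := (isIntegral_algebraMap_iff (algebraMap ℚ ℂ).injective).1 h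
  obtain ⟨m, hm⟩ := IsIntegrallyClosed.isIntegral_iff.1 hq
  exact ⟨m, hm.symm⟩

lemma intCast_dvd_of_isIntegral {a b : ℤ} {w : ℂ} (hw : IsIntegral ℤ w)
    (h : (b : ℂ) = a * w) : a ∣ b := by
  obtain rfl | ha := eq_or_ne a 0
  · simpa using h
  · have haC : (a : ℂ) ≠ 0 := by exact_mod_cast ha
    have hwq : w = ((b / a : ℚ) : ℂ) := by push_cast; rw [h]; field_simp
    obtain ⟨m, hm⟩ := exists_int_of_isIntegral_ratCast (hwq ▸ hw)
    refine ⟨m, ?_⟩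
    rw [hwq, hm] at h
    exact_mod_cast h

/-- The integers `T` and `N` are the trace `w + w̄` and the norm `w w̄` of `w`, relative to complex
conjugation; for nonrational elements of an imaginary quadratic field these are the trace and
norm over `ℚ`. -/
structure HasTraceNorm (w : ℂ) (T N : ℤ) : Prop where
  trace : w + conj w = T
  norm : w * conj w = N

variable {w z : ℂ} {T N : ℤ}

lemma HasTraceNorm.norm_nonneg (h : HasTraceNorm w T N) : 0 ≤ N := by
  have hN : (N : ℝ) = Complex.normSq w := by exact_mod_cast h.norm ▸ Complex.mul_conj w
  exact_mod_cast hN ▸ Complex.normSq_nonneg w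

lemma HasTraceNorm.trace_sq_le (h : HasTraceNorm w T N) : T ^ 2 ≤ 4 * N := by
  have hN : (N : ℝ) = Complex.normSq w := by exact_mod_cast h.norm ▸ Complex.mul_conj w
  have hT : (T : ℝ) = 2 * w.re := by exact_mod_cast h.trace ▸ Complex.add_conj w
  have hle : (T : ℝ) ^ 2 ≤ 4 * N := by
    rw [hN, hT, Complex.normSq_apply]
    nlinarith [sq_nonneg w.im]
  exact_mod_cast hle

lemma HasTraceNorm.norm_eq_one_of_mul_eq_one {T' N' : ℤ} (hw : HasTraceNorm w T N)
    (hz : HasTraceNorm z T' N') (hwz : w * z = 1) : N = 1 := by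
  have hmul : (N : ℂ) * N' = 1 := by
    rw [← hw.norm, ← hz.norm, mul_mul_mul_comm, ← map_mul, hwz, map_one, one_mul]
  exact Int.eq_one_of_mul_eq_one_right hw.norm_nonneg (by exact_mod_cast hmul)

lemma HasTraceNorm.pow_four_eq_one_or_pow_six_eq_one (h : HasTraceNorm w T 1) :
    w ^ 4 = 1 ∨ Odd T ∧ w ^ 6 = 1 := by
  have hquad : w ^ 2 - T * w + 1 = 0 := by
    have hnorm := h.norm
    rw [← h.trace]
    push_cast at hnorm
    linear_combination -hnorm
  have hT : T ^ 2 ≤ 2 ^ 2 := h.trace_sq_le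
  have hT' := abs_le_of_sq_le_sq' hT zero_le_two
  obtain rfl | rfl | rfl | rfl | rfl : T = -2 ∨ T = -1 ∨ T = 0 ∨ T = 1 ∨ T = 2 := by omega
  all_goals push_cast at hquad
  · have hw : w = -1 := by
      have hsq : (w + 1) ^ 2 = 0 := by linear_combination hquad
      exact eq_neg_of_add_eq_zero_left (pow_eq_zero_iff two_ne_zero |>.1 hsq)
    left
    rw [hw]
    norm_num
  · exact .inr ⟨by decide, by linear_combination (w ^ 3 + 1) * (w - 1) * hquad⟩
  · exact .inl (by linear_combination (w ^ 2 - 1) * hquad)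
  · exact .inr ⟨by decide, by linear_combination (w ^ 3 - 1) * (w + 1) * hquad⟩
  · have hw : w = 1 := by
      have hsq : (w - 1) ^ 2 = 0 := by linear_combination hquad
      exact sub_eq_zero.1 (pow_eq_zero_iff two_ne_zero |>.1 hsq)
    left
    rw [hw]
    norm_num

lemma HasTraceNorm.trace_dvd_of_pow_add_pow_eq {p : ℕ} {m : ℤ} (h : HasTraceNorm z T N)
    (hz : IsIntegral ℤ z) (hpodd : Odd p) (hsum : z ^ p + conj z ^ p = m) : T ∣ m := by
  let ζ : integralClosure ℤ ℂ := ⟨z, hz⟩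
  let ζ' : integralClosure ℤ ℂ := ⟨conj z, hz.map (starRingEnd ℂ).toIntAlgHom⟩
  obtain ⟨r, hr⟩ := hpodd.add_dvd_pow_add_pow ζ ζ'
  have hr' : z ^ p + conj z ^ p = (z + conj z) * r := congrArg Subtype.val hr
  exact intCast_dvd_of_isIntegral r.2 (by rw [← hsum, hr', h.trace])

lemma HasTraceNorm.prime_mul_norm_dvd_of_pow_add_pow_eq {p : ℕ} {m : ℤ}
    (h : HasTraceNorm z T N) (hz : IsIntegral ℤ z) (hp : p.Prime)
    (hsum : z ^ p + conj z ^ p = m) : p * N ∣ T ^ p - m := by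
  let ζ : integralClosure ℤ ℂ := ⟨z, hz⟩
  let ζ' : integralClosure ℤ ℂ := ⟨conj z, hz.map (starRingEnd ℂ).toIntAlgHom⟩
  obtain ⟨r, hr⟩ := exists_add_pow_prime_eq hp ζ ζ'
  have hr' : (z + conj z) ^ p = z ^ p + conj z ^ p + p * z * conj z * r :=
    congrArg Subtype.val hr
  rw [h.trace, hsum, mul_assoc (p : ℂ), h.norm] at hr'
  refine intCast_dvd_of_isIntegral r.2 ?_
  push_cast
  linear_combination hr'

lemma HasTraceNorm.trace_eq_two_of_pow_add_pow_eq_two {p : ℕ} (h : HasTraceNorm z T N)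
    (hz : IsIntegral ℤ z) (hN : 1 < N) (hp : p.Prime) (hpodd : Odd p)
    (hsum : z ^ p + conj z ^ p = (2 : ℤ)) : T = 2 := by
  have hdvd := h.trace_dvd_of_pow_add_pow_eq hz hpodd hsum
  have hcongr := h.prime_mul_norm_dvd_of_pow_add_pow_eq hz hp hsum
  have hp3 : 3 ≤ p := by have := hp.two_le; have := hpodd; grind
  have hlarge : 3 < p * N := by nlinarith
  have hbound := Int.le_of_dvd two_pos hdvd
  have hbound' := Int.le_of_dvd two_pos (neg_dvd.2 hdvd)
  obtain rfl | rfl | rfl | rfl | rfl : T = -2 ∨ T = -1 ∨ T = 0 ∨ T = 1 ∨ T = 2 := by omega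
  · have : Fact p.Prime := ⟨hp⟩
    have hfermat : (p : ℤ) ∣ (-2) ^ p - -2 :=
      (ZMod.intCast_eq_intCast_iff_dvd_sub _ _ p).1 (by push_cast; exact (ZMod.pow_card _).symm)
    have hp4 : (p : ℤ) ∣ 2 ^ 2 := by
      rw [show (2 : ℤ) ^ 2 = ((-2) ^ p - -2) - ((-2) ^ p - 2) by ring]
      exact dvd_sub hfermat (dvd_of_mul_right_dvd hcongr)
    have hp2 := Nat.le_of_dvd two_pos (hp.dvd_of_dvd_pow (by exact_mod_cast hp4))
    omega
  · rw [hpodd.neg_one_pow] at hcongr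
    have := Int.le_of_dvd (by norm_num) ((dvd_neg.2 hcongr))
    omega
  · simp at hdvd
  · rw [one_pow] at hcongr
    have := Int.le_of_dvd (by norm_num) ((dvd_neg.2 hcongr))
    omega
  · rfl

end TraceNorm

section QuadraticField

open ComplexConjugate

variable {d : ℤ} {w : ℂ}

/-- The square root of `d` generating `Qsqrt d`. -/
noncomputable def sqrtInt (d : ℤ) : ℂ :=
  (d : ℂ) ^ ((1 : ℂ) / 2)

lemma sqrtInt_sq (d : ℤ) : sqrtInt d ^ 2 = d := by
  rw [sqrtInt, one_div]
  exact_mod_cast Complex.cpow_nat_inv_pow (d : ℂ) two_ne_zero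

lemma isIntegral_sqrtInt (d : ℤ) : IsIntegral ℤ (sqrtInt d) :=
  .of_pow two_pos (sqrtInt_sq d ▸ isIntegral_algebraMap)

lemma sqrtInt_mem (d : ℤ) : sqrtInt d ∈ Qsqrt d :=
  IntermediateField.mem_adjoin_simple_self ℚ _

lemma conj_sqrtInt (hd : d < 0) : conj (sqrtInt d) = -sqrtInt d := by
  have hsq : conj (sqrtInt d) ^ 2 = sqrtInt d ^ 2 := by
    rw [← map_pow, sqrtInt_sq, map_intCast]
  refine (sq_eq_sq_iff_eq_or_eq_neg.1 hsq).resolve_left fun hreal => ?_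
  obtain ⟨r, hr⟩ := Complex.conj_eq_iff_real.1 hreal
  have hrd : r ^ 2 = d := by exact_mod_cast hr ▸ sqrtInt_sq d
  have hdR : (d : ℝ) < 0 := by exact_mod_cast hd
  exact (hrd ▸ sq_nonneg r).not_gt hdR

/-- The ring of integers of `Qsqrt d`, as a subring of `ℂ`, where complex conjugation is
available. -/
noncomputable def integersSqrt (d : ℤ) : Subring ℂ :=
  (Qsqrt d).toSubring ⊓ (integralClosure ℤ ℂ).toSubring

lemma sqrtInt_mem_integersSqrt (d : ℤ) : sqrtInt d ∈ integersSqrt d :=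
  ⟨sqrtInt_mem d, isIntegral_sqrtInt d⟩

lemma exists_eq_add_mul_sqrtInt (hw : w ∈ Qsqrt d) : ∃ u v : ℚ, w = u + v * sqrtInt d := by
  have halg : IsAlgebraic ℚ (sqrtInt d) := (isIntegral_sqrtInt d).tower_top.isAlgebraic
  have hw' : w ∈ Algebra.adjoin ℚ {sqrtInt d} := by
    rwa [← IntermediateField.adjoin_simple_toSubalgebra_of_isAlgebraic halg]
  clear hw
  induction hw' using Algebra.adjoin_induction with
  | mem x hx => exact ⟨0, 1, by simpa using hx⟩
  | algebraMap q => exact ⟨q, 0, by simp⟩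
  | add x y _ _ hx hy =>
    obtain ⟨u, v, rfl⟩ := hx
    obtain ⟨u', v', rfl⟩ := hy
    exact ⟨u + u', v + v', by push_cast; ring⟩
  | mul x y _ _ hx hy =>
    obtain ⟨u, v, rfl⟩ := hx
    obtain ⟨u', v', rfl⟩ := hy
    exact ⟨u * u' + v * v' * d, u * v' + u' * v,
      by push_cast; linear_combination (v : ℂ) * v' * sqrtInt_sq d⟩

lemma conj_mem_integersSqrt (hd : d < 0) (hw : w ∈ integersSqrt d) :
    conj w ∈ integersSqrt d := by
  refine ⟨?_, hw.2.map (starRingEnd ℂ).toIntAlgHom⟩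
  obtain ⟨u, v, rfl⟩ := exists_eq_add_mul_sqrtInt hw.1
  rw [map_add, map_mul, conj_sqrtInt hd, map_ratCast, map_ratCast]
  exact (Qsqrt d).add_mem (SubfieldClass.ratCast_mem _ u)
    ((Qsqrt d).mul_mem (SubfieldClass.ratCast_mem _ v) ((Qsqrt d).neg_mem (sqrtInt_mem d)))

lemma exists_int_of_conj_eq_self (hd : d < 0) (hw : w ∈ integersSqrt d) (hconj : conj w = w) :
    ∃ m : ℤ, w = m := by
  obtain ⟨u, v, hwuv⟩ := exists_eq_add_mul_sqrtInt hw.1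
  have hwu : w = u := by
    have hconj' := hconj
    rw [hwuv, map_add, map_mul, conj_sqrtInt hd, map_ratCast, map_ratCast] at hconj'
    linear_combination hwuv - hconj' / 2
  obtain ⟨m, hm⟩ := exists_int_of_isIntegral_ratCast (hwu ▸ hw.2)
  exact ⟨m, by rw [hwu, hm, Rat.cast_intCast]⟩

lemma exists_hasTraceNorm (hd : d < 0) (hw : w ∈ integersSqrt d) :
    ∃ T N, HasTraceNorm w T N := by
  have hw' := conj_mem_integersSqrt hd hw
  obtain ⟨T, hT⟩ := exists_int_of_conj_eq_self hd (add_mem hw hw')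
    (by rw [map_add, Complex.conj_conj, add_comm])
  obtain ⟨N, hN⟩ := exists_int_of_conj_eq_self hd (mul_mem hw hw')
    (by rw [map_mul, Complex.conj_conj, mul_comm])
  exact ⟨T, N, hT, hN⟩

lemma HasTraceNorm.exists_sq_eq_disc_mul {T N : ℤ} (h : HasTraceNorm w T N) (hd : d < 0)
    (hw : w ∈ integersSqrt d) :
    ∃ s : ℤ, (w - conj w) * sqrtInt d = s ∧ (T ^ 2 - 4 * N) * d = s ^ 2 := by
  obtain ⟨s, hs⟩ := exists_int_of_conj_eq_self hd
    (mul_mem (sub_mem hw (conj_mem_integersSqrt hd hw)) (sqrtInt_mem_integersSqrt d))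
    (by rw [map_mul, map_sub, Complex.conj_conj, conj_sqrtInt hd]; ring)
  refine ⟨s, hs, ?_⟩
  have hdisc : ((T : ℂ) ^ 2 - 4 * N) * d = s ^ 2 := by
    rw [← h.trace, ← h.norm, ← hs, ← sqrtInt_sq]
    ring
  exact_mod_cast hdisc

lemma hasTraceNorm_one_add_sqrtInt (hd : d < 0) : HasTraceNorm (1 + sqrtInt d) 2 (1 - d) := by
  constructor <;> rw [map_add, map_one, conj_sqrtInt hd]
  · push_cast; ring
  · push_cast; linear_combination -sqrtInt_sq d

variable {p : ℕ} {z e f : ℂ}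

lemma eq_five_of_pow_eq_one_add_sqrtInt (hd : d < 0) (hp : p.Prime) (hpodd : Odd p)
    (hz : z ∈ integersSqrt d) (h : z ^ p = 1 + sqrtInt d) : p = 5 ∧ d = -242 := by
  obtain ⟨T, N, hTN⟩ := exists_hasTraceNorm hd hz
  have hone := h ▸ hasTraceNorm_one_add_sqrtInt hd
  have hnorm : N ^ p = 1 - d := by
    have hnorm' : (N : ℂ) ^ p = ((1 - d : ℤ) : ℂ) := by
      rw [← hTN.norm, mul_pow, ← map_pow, hone.norm]
    exact_mod_cast hnorm'
  have hN : 1 < N := by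
    by_contra! hle
    have := pow_le_one₀ hTN.norm_nonneg hle (n := p)
    omega
  obtain rfl := hTN.trace_eq_two_of_pow_add_pow_eq_two hz.2 hN hp hpodd
    (map_pow conj z p ▸ hone.trace)
  obtain ⟨s, -, hs⟩ := hTN.exists_sq_eq_disc_mul hd hz
  have hs' : s ^ 2 = (2 * (N - 1)) ^ 2 * ∑ i ∈ Finset.range p, N ^ i := by
    linear_combination -hs - 4 * (N - 1) * (hnorm + geom_sum_mul N p)
  obtain ⟨q, rfl⟩ : 2 * (N - 1) ∣ s := (Int.pow_dvd_pow_iff two_ne_zero).1 ⟨_, hs'⟩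
  have hq : ∑ i ∈ Finset.range p, N ^ i = q ^ 2 := by
    rw [mul_pow] at hs'
    exact (mul_left_cancel₀ (by positivity [sub_pos.2 hN]) hs').symm
  obtain ⟨rfl, rfl⟩ := eq_three_and_eq_five_of_geom_sum_eq_sq hN hpodd hp.ne_one hq
  exact ⟨rfl, by linarith⟩

lemma HasTraceNorm.even_trace_of_cube_mul_eq {t : ℤ} (he : HasTraceNorm e t 1) (hd : d < 0)
    (hdeven : Even d) (hzmem : z ∈ integersSqrt d) (hemem : e ∈ integersSqrt d)
    (h : z ^ 3 * e = 1 + sqrtInt d) : Even t := by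
  obtain ⟨T, M, hz⟩ := exists_hasTraceNorm hd hzmem
  obtain ⟨s, hs, hs2⟩ := he.exists_sq_eq_disc_mul hd hemem
  have hnorm := he.norm
  push_cast at hnorm
  have hconj : conj z ^ 3 * conj e = 1 - sqrtInt d := by
    rw [← map_pow, ← map_mul, h, map_add, map_one, conj_sqrtInt hd, sub_eq_add_neg]
  have hM : M ^ 3 = 1 - d := by
    have hM' : (M : ℂ) ^ 3 = 1 - d := by
      rw [← hz.norm, ← sqrtInt_sq]
      linear_combination conj z ^ 3 * conj e * h + (1 + sqrtInt d) * hconj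
        - (z * conj z) ^ 3 * hnorm
    exact_mod_cast hM'
  have ht : T * (T ^ 2 - 3 * M) = t - s := by
    have ht' : (T : ℂ) * (T ^ 2 - 3 * M) = t - s := by
      rw [← hz.trace, ← hz.norm, ← he.trace, ← hs]
      linear_combination conj e * h + e * hconj - (z ^ 3 + conj z ^ 3) * hnorm
    exact_mod_cast ht'
  have hs_even : Even s := (Int.even_pow' two_ne_zero).1 (hs2 ▸ hdeven.mul_left _)
  have hM_odd : Odd M := (Int.odd_pow' three_ne_zero).1 (hM ▸ odd_one.sub_even hdeven)
  have hT_even : Even (T * (T ^ 2 - 3 * M)) := by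
    rw [Int.even_mul, Int.even_sub, Int.even_pow' two_ne_zero, Int.even_mul]
    grind
  rw [ht] at hT_even
  exact (Int.even_sub.1 hT_even).2 hs_even

lemma exists_pow_eq_of_pow_mul_eq (hd : d < 0) (hdeven : Even d) (hp : p.Prime) (hpodd : Odd p)
    (hz : z ∈ integersSqrt d) (he : e ∈ integersSqrt d) (hf : f ∈ integersSqrt d)
    (hef : e * f = 1) (h : z ^ p * e = 1 + sqrtInt d) :
    ∃ y ∈ integersSqrt d, y ^ p = 1 + sqrtInt d := by
  obtain ⟨t, N, hetN⟩ := exists_hasTraceNorm hd he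
  obtain ⟨_, _, hfTN⟩ := exists_hasTraceNorm hd hf
  obtain rfl := hetN.norm_eq_one_of_mul_eq_one hfTN hef
  have hcop : p.Coprime (orderOf e) := by
    obtain he4 | ⟨ht, he6⟩ := hetN.pow_four_eq_one_or_pow_six_eq_one
    · exact (hpodd.coprime_two_right.pow_right 2).of_dvd_right (orderOf_dvd_of_pow_eq_one he4)
    · have hp3 : p ≠ 3 := by
        rintro rfl
        exact Int.not_even_iff_odd.2 ht (hetN.even_trace_of_cube_mul_eq hd hdeven hz he h)
      have hcop3 : p.Coprime 3 := (Nat.coprime_primes hp Nat.prime_three).2 hp3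
      exact (hpodd.coprime_two_right.mul_right hcop3).of_dvd_right
        (orderOf_dvd_of_pow_eq_one he6)
  obtain ⟨m, hm⟩ := exists_pow_eq_self_of_coprime hcop
  exact ⟨z * e ^ m, mul_mem hz (pow_mem he m),
    by rw [mul_pow, ← pow_mul, mul_comm m, pow_mul, hm, h]⟩

end QuadraticField

section ClassGroup

variable {R : Type*} [CommRing R] [IsDedekindDomain R] {n : ℕ} {x y c : R}

lemma exists_span_singleton_eq_pow_of_mul_eq_pow (hxy : IsCoprime x y) (h : x * y = c ^ n) :
    ∃ I : Ideal R, Ideal.span {x} = I ^ n := by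
  refine exists_eq_pow_of_mul_eq_pow (b := Ideal.span {y}) (c := Ideal.span {c}) ?_ ?_
  · rw [Ideal.isCoprime_iff_gcd.1 ((Ideal.isCoprime_span_singleton_iff x y).2 hxy)]
    exact isUnit_one
  · rw [Ideal.span_singleton_mul_span_singleton, h, Ideal.span_singleton_pow]

lemma dvd_card_classGroup_of_mul_eq_pow (hn : n ≠ 0) (hx : x ≠ 0) (hxy : IsCoprime x y)
    (h : x * y = c ^ n)
    (hroot : ∀ p : ℕ, p.Prime → p ∣ n → ∀ b : R, ¬ Associated (b ^ p) x) :
    n ∣ Nat.card (ClassGroup R) := by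
  obtain ⟨I, hI⟩ := exists_span_singleton_eq_pow_of_mul_eq_pow hxy h
  have hI0 : I ≠ 0 := by
    rintro rfl
    rw [zero_pow hn] at hI
    exact hx (Ideal.span_singleton_eq_bot.1 hI)
  let J : nonZeroDivisors (Ideal R) := ⟨I, mem_nonZeroDivisors_of_ne_zero hI0⟩
  have horder : orderOf (ClassGroup.mk0 J) = n := by
    refine orderOf_eq_of_pow_and_pow_div_prime (Nat.pos_of_ne_zero hn) ?_ fun p hp hpn hone => ?_
    · rw [← map_pow, ClassGroup.mk0_eq_one_iff]
      exact ⟨x, hI.symm⟩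
    · rw [← map_pow, ClassGroup.mk0_eq_one_iff] at hone
      obtain ⟨b, hb : I ^ (n / p) = Ideal.span {b}⟩ := hone
      refine hroot p hp hpn b ?_
      rw [← Ideal.span_singleton_eq_span_singleton, ← Ideal.span_singleton_pow, ← hb, ← pow_mul,
        Nat.div_mul_cancel hpn, hI]
  exact horder ▸ orderOf_dvd_natCard _

end ClassGroup

section RingOfIntegers

open NumberField

variable {d : ℤ}

instance numberField_qsqrt (d : ℤ) : NumberField (Qsqrt d) where
  to_finiteDimensional :=
    IntermediateField.adjoin.finiteDimensional (isIntegral_sqrtInt d).tower_top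

/-- The square root of `d`, as an element of the ring of integers of `Qsqrt d`. -/
noncomputable def sqrtInteger (d : ℤ) : 𝓞 (Qsqrt d) :=
  ⟨⟨sqrtInt d, sqrtInt_mem d⟩,
    (isIntegral_algHom_iff ((Qsqrt d).val.restrictScalars ℤ) Subtype.val_injective).1
      (isIntegral_sqrtInt d)⟩

lemma algebraMap_sqrtInteger (d : ℤ) :
    algebraMap (𝓞 (Qsqrt d)) ℂ (sqrtInteger d) = sqrtInt d :=
  rfl

lemma algebraMap_mem_integersSqrt (r : 𝓞 (Qsqrt d)) :
    algebraMap (𝓞 (Qsqrt d)) ℂ r ∈ integersSqrt d :=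
  ⟨r.1.2, r.2.map ((Qsqrt d).val.restrictScalars ℤ)⟩

lemma sqrtInteger_sq (d : ℤ) : sqrtInteger d ^ 2 = d := by
  apply FaithfulSMul.algebraMap_injective (𝓞 (Qsqrt d)) ℂ
  rw [map_pow, algebraMap_sqrtInteger, sqrtInt_sq, map_intCast]

lemma eq_five_of_associated_pow {p : ℕ} (hd : d < 0) (hdeven : Even d) (hp : p.Prime)
    (hpodd : Odd p) {b : 𝓞 (Qsqrt d)} (h : Associated (b ^ p) (1 + sqrtInteger d)) :
    p = 5 ∧ d = -242 := by
  obtain ⟨e, he⟩ := h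
  let φ := algebraMap (𝓞 (Qsqrt d)) ℂ
  have heφ : φ b ^ p * φ e = 1 + sqrtInt d := by
    rw [← map_pow, ← map_mul, he, map_add, map_one, algebraMap_sqrtInteger]
  have hinv : φ e * φ ↑e⁻¹ = 1 := by
    rw [← map_mul, e.mul_inv, map_one]
  obtain ⟨y, hy, hyp⟩ := exists_pow_eq_of_pow_mul_eq hd hdeven hp hpodd
    (algebraMap_mem_integersSqrt b) (algebraMap_mem_integersSqrt e.1)
    (algebraMap_mem_integersSqrt _) hinv heφ
  exact eq_five_of_pow_eq_one_add_sqrtInt hd hp hpodd hy hyp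

lemma one_add_sqrtInteger_mul_one_sub (d : ℤ) :
    (1 + sqrtInteger d) * (1 - sqrtInteger d) = 1 - d := by
  linear_combination -sqrtInteger_sq d

lemma isCoprime_one_add_sqrtInteger_one_sub (hdeven : Even d) :
    IsCoprime (1 + sqrtInteger d) (1 - sqrtInteger d) := by
  obtain ⟨j, rfl⟩ := hdeven
  have hmul := one_add_sqrtInteger_mul_one_sub (j + j)
  push_cast at hmul
  exact ⟨1 - sqrtInteger (j + j) + j, j, by linear_combination hmul⟩

end RingOfIntegers

lemma eq_five_and_eq_three_of_pow_eq {n : ℕ} {V : ℤ} (hV : 0 ≤ V) (hn : 5 ∣ n)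
    (h : V ^ n = 243) : n = 5 ∧ V = 3 := by
  lift V to ℕ using hV
  obtain ⟨m, rfl⟩ := hn
  have hpow : (V ^ m) ^ 5 = 3 ^ 5 := by
    rw [← pow_mul, mul_comm m]
    exact_mod_cast h
  obtain ⟨rfl, rfl⟩ := Nat.prime_three.pow_eq_iff.1 (Nat.pow_left_injective (by simp) hpow)
  exact ⟨rfl, rfl⟩

/-- Let `n ≥ 3` and `V ≥ 3` be odd integers with `(n, V) ≠ (5, 3)`. Then the class number
of the imaginary quadratic field `ℚ(√(1 − Vⁿ))` is divisible by `n`. -/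
theorem classNumber_dvd_of_one_sub_pow
    (n : ℕ) (V : ℤ) (hn : 3 ≤ n) (hnodd : Odd n) (hV : 3 ≤ V) (hVodd : Odd V)
    (hexc : ¬ (n = 5 ∧ V = 3)) :
    n ∣ classNumSqrt (1 - V ^ n) := by
  have hd : 1 - V ^ n < 0 := by linarith [one_lt_pow₀ (by omega : 1 < V) (by omega : n ≠ 0)]
  have hdeven : Even (1 - V ^ n) := odd_one.sub_odd hVodd.pow
  have hmul : (1 + sqrtInteger (1 - V ^ n)) * (1 - sqrtInteger (1 - V ^ n)) = (V : _) ^ n := by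
    rw [one_add_sqrtInteger_mul_one_sub]
    push_cast
    ring
  have hmul0 : (1 + sqrtInteger (1 - V ^ n)) * (1 - sqrtInteger (1 - V ^ n)) ≠ 0 :=
    hmul ▸ pow_ne_zero n (by exact_mod_cast (by omega : V ≠ 0))
  refine dvd_card_classGroup_of_mul_eq_pow (by omega) (left_ne_zero_of_mul hmul0)
    (isCoprime_one_add_sqrtInteger_one_sub hdeven) hmul fun p hp hpn b hassoc => ?_
  obtain ⟨rfl, h242⟩ := eq_five_of_associated_pow hd hdeven hp (hnodd.of_dvd_nat hpn) hassoc
  exact hexc (eq_five_and_eq_three_of_pow_eq (by omega) hpn (by linarith))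
end

section
/- Let n ≥ 3 be an odd integer, let k ≥ 2 be an integer, and set d = 4(1 − 4k^n)^n. Then d + 1 = 1 − 4(4k^n − 1)^n, and n divides the class number of the imaginary quadratic field ℚ(√(d + 1)). -/
/-!
Put `U = 4 * k ^ n - 1 ≥ 2` and `D = d + 1 = 1 - 4 * U ^ n`. In the ring of integers of `ℚ(√D)`,
`α = (1 + √D) / 2` satisfies `α * (1 - α) = U ^ n`, where the factors are coprime, so `(α) = I ^ n`
for an ideal `I`, and it suffices that the class of `I` has order exactly `n`. Otherwise
`I ^ (n / p)` is principal for some prime `p ∣ n` and `α` is a unit times a `p`-th power. That unit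
is a `p`-th power as well: the only obstruction would be a cube root of unity when `p = 3 ∣ n`,
which puts a rational point on `4 * w ^ 3 = 3 * f ^ 2 + 1`, a curve isomorphic to the Fermat cubic.
Hence `α = γ ^ p`, and with `t` and `V ≥ 2` the trace and norm of `γ`, the trace of `α` is the value
at `t` of the `p`-th Dickson polynomial with parameter `V`. It equals `1`, so `t = ±1`, and a
congruence modulo `V ^ 3` then yields a contradiction.
-/

open Polynomial NumberField

section Dickson

variable {R : Type*} [CommRing R] (a t : R)

lemma eval_dickson_one_add_four (j : ℕ) :
    (dickson 1 a (j + 4)).eval t =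
      (t ^ 2 - 2 * a) * (dickson 1 a (j + 2)).eval t - a ^ 2 * (dickson 1 a j).eval t := by
  simp only [dickson_add_two, eval_sub, eval_mul, eval_X, eval_C]
  ring

lemma X_dvd_dickson_one_of_odd {j : ℕ} (hj : Odd j) : X ∣ dickson 1 a j := by
  obtain ⟨r, rfl⟩ := hj
  induction r with
  | zero => simp
  | succ r ih =>
    rw [show 2 * (r + 1) + 1 = 2 * r + 1 + 2 by ring, dickson_add_two]
    exact dvd_sub (dvd_mul_right _ _) (ih.mul_left _)

variable {t} in
lemma pow_three_dvd_eval_dickson_one_sub (ht : t ^ 2 = 1) (r : ℕ) :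
    a ^ 3 ∣ (dickson 1 a (2 * r + 3)).eval t -
      t * (1 - (2 * r + 3) * a + (2 * r + 3) * r * a ^ 2) := by
  induction r using Nat.twoStepInduction with
  | zero =>
    refine ⟨0, ?_⟩
    simp only [dickson_add_two, dickson_one, dickson_zero, eval_sub, eval_mul, eval_X, eval_C,
      eval_ofNat, eval_one, Nat.cast_one, mul_zero, zero_add, Nat.reduceAdd]
    push_cast
    linear_combination t * ht
  | one =>
    refine ⟨0, ?_⟩
    simp only [dickson_add_two, dickson_one, dickson_zero, eval_sub, eval_mul, eval_X, eval_C,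
      eval_ofNat, eval_one, Nat.cast_one, mul_zero, zero_add, mul_one, Nat.reduceAdd]
    linear_combination (t ^ 3 + (1 - 5 * a) * t) * ht
  | more r ih₀ ih₁ =>
    obtain ⟨c₀, hc₀⟩ := ih₀
    obtain ⟨c₁, hc₁⟩ := ih₁
    rw [show 2 * (r + 2) + 3 = 2 * r + 3 + 4 by ring, eval_dickson_one_add_four, ht]
    rw [show 2 * (r + 1) + 3 = 2 * r + 3 + 2 by ring] at hc₁
    refine ⟨(1 - 2 * a) * c₁ - a ^ 2 * c₀ - t * ((2 * r + 3) * r * a + 4 * r ^ 2 + 12 * r + 7), ?_⟩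
    push_cast at hc₁ ⊢
    linear_combination (1 - 2 * a) * hc₁ - a ^ 2 * hc₀

lemma eval_dickson_one_ne_one {p : ℕ} (hp : p.Prime) (hodd : Odd p) {a : ℤ} (ha : 2 ≤ a)
    (t : ℤ) : (dickson 1 a p).eval t ≠ 1 := by
  intro h
  have ht : IsUnit t := isUnit_of_dvd_one <| by
    simpa [h] using map_dvd (evalRingHom t) (X_dvd_dickson_one_of_odd a hodd)
  obtain ⟨r, rfl⟩ : ∃ r, p = 2 * r + 3 := by
    obtain ⟨q, rfl⟩ := hodd
    exact ⟨q - 1, by have := hp.two_le; omega⟩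
  obtain ⟨c, hc⟩ := pow_three_dvd_eval_dickson_one_sub a (Int.isUnit_sq ht) r
  rw [h] at hc
  obtain rfl | rfl := Int.isUnit_iff.mp ht
  · have hcop : IsCoprime (a ^ 2) (1 - r * a) := .pow_left ⟨r, 1, by ring⟩
    have hmul : a * a ^ 2 ∣ a * ((2 * r + 3 : ℕ) * (1 - r * a)) :=
      ⟨c, by push_cast; linear_combination hc⟩
    have hsq : a * a ∣ (2 * r + 3 : ℕ) :=
      sq a ▸ hcop.dvd_of_dvd_mul_right ((mul_dvd_mul_iff_left (by omega)).mp hmul)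
    have ha_unit := Int.isUnit_iff.mp ((Nat.prime_iff_prime_int.mp hp).squarefree a hsq)
    omega
  · have hdvd : a ∣ 2 :=
      ⟨a ^ 2 * c + (2 * r + 3) - (2 * r + 3) * r * a, by linear_combination hc⟩
    obtain rfl : a = 2 := le_antisymm (Int.le_of_dvd two_pos hdvd) ha
    have hmod : 8 * (r * (r + 1) : ℤ) - 4 = 8 * c := by linear_combination hc
    omega

end Dickson

lemma eq_one_of_four_mul_cube_eq {w f : ℚ} (h : 4 * w ^ 3 = 3 * f ^ 2 + 1) : w = 1 := by
  have fermat : FermatLastTheoremWith ℚ 3 := fermatLastTheoremFor_iff_rat.mp fermatLastTheoremThree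
  have hw : w ≠ 0 := by rintro rfl; nlinarith [sq_nonneg f]
  -- The curve is the Fermat cubic: `((f + 1) / 2) ^ 3 - ((f - 1) / 2) ^ 3 = (3 * f ^ 2 + 1) / 4`.
  have hcubes : w ^ 3 + ((f - 1) / 2) ^ 3 = ((f + 1) / 2) ^ 3 := by linear_combination h / 4
  have hf : f ^ 2 = 1 := by
    by_contra hf
    refine fermat w _ _ hw ?_ ?_ hcubes <;> intro h0 <;> apply hf
    · rw [show f = 1 by linarith, one_pow]
    · rw [show f = -1 by linarith, neg_one_sq]
  have hw3 : w ^ 3 = 1 ^ 3 := by linarith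
  exact (Odd.strictMono_pow (by decide)).injective hw3

lemma one_sub_four_mul_cube_mul_sq_ne {w : ℚ} (hw : w ≠ 1) (b : ℚ) :
    (1 - 4 * w ^ 3) * b ^ 2 ≠ -3 := by
  intro h
  have hb : b ≠ 0 := by rintro rfl; norm_num at h
  refine hw (eq_one_of_four_mul_cube_eq (f := b⁻¹) ?_)
  field_simp
  linear_combination -h

section QuadraticExtension

variable {R S : Type*} [CommRing R] [StrongRankCondition R] [CommRing S] [Algebra R S]
  [Algebra.IsQuadraticExtension R S]

variable (R) in
lemma sq_eq_trace_mul_sub_norm (x : S) :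
    x ^ 2 = algebraMap R S (Algebra.trace R S x) * x - algebraMap R S (Algebra.norm R x) := by
  have : Nontrivial R := nontrivial_of_invariantBasisNumber R
  let b : Module.Basis (Fin 2) R S :=
    Module.finBasisOfFinrankEq R S (Algebra.IsQuadraticExtension.finrank_eq_two R S)
  have h := Matrix.aeval_self_charpoly (Algebra.leftMulMatrix b x)
  rw [aeval_algHom_apply, Matrix.charpoly_fin_two, ← Algebra.trace_eq_matrix_trace,
    ← Algebra.norm_eq_matrix_det] at h
  have hroot := Algebra.leftMulMatrix_injective b (h.trans (map_zero _).symm)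
  simp only [map_add, map_sub, map_mul, map_pow, aeval_X, aeval_C] at hroot
  linear_combination hroot

variable (R S) in
lemma trace_one_eq_two : Algebra.trace R S 1 = 2 := by
  have : Nontrivial R := nontrivial_of_invariantBasisNumber R
  rw [← map_one (algebraMap R S), Algebra.trace_algebraMap,
    Algebra.IsQuadraticExtension.finrank_eq_two, nsmul_one, Nat.cast_ofNat]

lemma trace_pow_eq_eval_dickson (x : S) (j : ℕ) :
    Algebra.trace R S (x ^ j) =
      (dickson 1 (Algebra.norm R x) j).eval (Algebra.trace R S x) := by
  induction j using Nat.twoStepInduction with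
  | zero =>
    rw [pow_zero, trace_one_eq_two, dickson_zero, Nat.cast_one, eval_sub, eval_ofNat, eval_one]
    norm_num
  | one => simp
  | more j ih₀ ih₁ =>
    have hx : x ^ (j + 2) =
        Algebra.trace R S x • x ^ (j + 1) - Algebra.norm R x • x ^ j := by
      rw [Algebra.smul_def, Algebra.smul_def]
      linear_combination x ^ j * sq_eq_trace_mul_sub_norm R x
    simp only [hx, map_sub, map_smul, ih₀, ih₁, dickson_add_two, eval_sub, eval_mul, eval_X,
      eval_C, smul_eq_mul]

end QuadraticExtension

section QuadraticField

variable {F K : Type*} [Field F] [Field K] [Algebra F K] [Algebra.IsQuadraticExtension F K]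

lemma exists_eq_algebraMap_add_mul {s : K} (hs : s ∉ (algebraMap F K).range) (x : K) :
    ∃ a b : F, x = algebraMap F K a + algebraMap F K b * s := by
  have hli : LinearIndependent F ![1, s] := by
    rw [LinearIndependent.pair_iff' one_ne_zero]
    intro a ha
    exact hs ⟨a, by rw [← ha, Algebra.smul_def, mul_one]⟩
  have hspan := hli.span_eq_top_of_card_eq_finrank'
    (Algebra.IsQuadraticExtension.finrank_eq_two F K).symm
  have hx : x ∈ Submodule.span F {1, s} := by
    rw [← Matrix.range_cons_cons_empty 1 s ![], hspan]
    exact Submodule.mem_top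
  obtain ⟨a, b, rfl⟩ := Submodule.mem_span_pair.mp hx
  exact ⟨a, b, by simp only [Algebra.smul_def, mul_one]⟩

lemma trace_eq_zero_of_sq_eq_algebraMap {s : K} {d : F} (hs : s ∉ (algebraMap F K).range)
    (hd : s ^ 2 = algebraMap F K d) : Algebra.trace F K s = 0 := by
  by_contra h
  refine hs ⟨(d + Algebra.norm F s) / Algebra.trace F K s, ?_⟩
  rw [map_div₀, div_eq_iff (by simpa using h), map_add]
  linear_combination sq_eq_trace_mul_sub_norm F s - hd

lemma exists_trace_sq_sub_four_mul_norm_eq {s : K} {d : F} (hs : s ∉ (algebraMap F K).range)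
    (hd : s ^ 2 = algebraMap F K d) (x : K) :
    ∃ b : F, Algebra.trace F K x ^ 2 - 4 * Algebra.norm F x = d * b ^ 2 := by
  obtain ⟨a, b, hx⟩ := exists_eq_algebraMap_add_mul hs x
  have htr : Algebra.trace F K x = 2 * a := by
    rw [hx, map_add, ← Algebra.smul_def, map_smul, trace_eq_zero_of_sq_eq_algebraMap hs hd,
      smul_zero, add_zero, Algebra.algebraMap_eq_smul_one, map_smul, trace_one_eq_two, smul_eq_mul,
      mul_comm]
  refine ⟨2 * b, (algebraMap F K).injective ?_⟩
  have hnorm := sq_eq_trace_mul_sub_norm F x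
  simp only [htr, map_sub, map_mul, map_pow, map_ofNat] at hnorm ⊢
  linear_combination (-4) * hnorm + 4 * (x - algebraMap F K a + algebraMap F K b * s) * hx +
    4 * algebraMap F K b ^ 2 * hd

end QuadraticField

lemma notMem_range_of_sq_eq_of_neg {F L : Type*} [Field F] [LinearOrder F] [IsStrictOrderedRing F]
    [Ring L] [Nontrivial L] [Algebra F L] {s : L} {d : F} (hd : d < 0)
    (hs : s ^ 2 = algebraMap F L d) : s ∉ (algebraMap F L).range := by
  rintro ⟨a, rfl⟩
  rw [← map_pow] at hs
  exact (sq_nonneg a).not_gt ((algebraMap F L).injective hs ▸ hd)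

lemma pow_four_eq_one_or_of_sq_eq {R : Type*} [CommRing R] [IsReduced R] {x : R} {t : ℤ}
    (hx : x ^ 2 = t * x - 1) (ht : t ^ 2 ≤ 4) : x ^ 4 = 1 ∨ x ^ 6 = 1 ∧ t ^ 2 = 1 := by
  have hlower : -2 ≤ t := by nlinarith
  have hupper : t ≤ 2 := by nlinarith
  have hcases : t = 0 ∨ t ^ 2 = 1 ∨ t = 2 ∨ t = -2 := by interval_cases t <;> simp
  rcases hcases with rfl | ht | rfl | rfl
  · push_cast at hx
    left
    linear_combination (x ^ 2 - 1) * hx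
  · have ht_cast : (t : R) ^ 2 = 1 := mod_cast congrArg (Int.cast : ℤ → R) ht
    exact .inr ⟨by linear_combination (x ^ 2 - 1) *
      ((x ^ 2 + 1 + t * x) * hx + x ^ 2 * ht_cast), ht⟩
  · have hsq : (x - 1) ^ 2 = 0 := by push_cast at hx; linear_combination hx
    left
    rw [sub_eq_zero.mp (eq_zero_of_pow_eq_zero hsq), one_pow]
  · have hsq : (x + 1) ^ 2 = 0 := by push_cast at hx; linear_combination hx
    left
    rw [eq_neg_of_add_eq_zero_left (eq_zero_of_pow_eq_zero hsq)]
    norm_num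

section ImaginaryQuadraticField

variable {K : Type*} [Field K] [NumberField K] [Algebra.IsQuadraticExtension ℚ K]

instance : Algebra.IsQuadraticExtension ℤ (𝓞 K) :=
  ⟨by rw [RingOfIntegers.rank, Algebra.IsQuadraticExtension.finrank_eq_two]⟩

variable {s : K} {d : ℚ}

lemma exists_int_trace_sq_sub_four_mul_norm_eq (hd : d < 0) (hs : s ^ 2 = algebraMap ℚ K d)
    (x : 𝓞 K) :
    ∃ b : ℚ, (Algebra.trace ℤ (𝓞 K) x : ℚ) ^ 2 - 4 * Algebra.norm ℤ x = d * b ^ 2 := by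
  rw [Algebra.coe_trace_int, Algebra.coe_norm_int]
  exact exists_trace_sq_sub_four_mul_norm_eq (notMem_range_of_sq_eq_of_neg hd hs) hs x

lemma trace_sq_le_four_mul_norm (hd : d < 0) (hs : s ^ 2 = algebraMap ℚ K d) (x : 𝓞 K) :
    Algebra.trace ℤ (𝓞 K) x ^ 2 ≤ 4 * Algebra.norm ℤ x := by
  obtain ⟨b, hb⟩ := exists_int_trace_sq_sub_four_mul_norm_eq hd hs x
  have hb_nonpos : d * b ^ 2 ≤ 0 := mul_nonpos_of_nonpos_of_nonneg hd.le (sq_nonneg b)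
  exact_mod_cast (by linarith :
    (Algebra.trace ℤ (𝓞 K) x : ℚ) ^ 2 ≤ 4 * (Algebra.norm ℤ x : ℚ))

lemma norm_nonneg_of_sq_eq (hd : d < 0) (hs : s ^ 2 = algebraMap ℚ K d) (x : 𝓞 K) :
    0 ≤ Algebra.norm ℤ x := by
  linarith [trace_sq_le_four_mul_norm hd hs x, sq_nonneg (Algebra.trace ℤ (𝓞 K) x)]

lemma norm_unit_eq_one (hd : d < 0) (hs : s ^ 2 = algebraMap ℚ K d) (u : (𝓞 K)ˣ) :
    Algebra.norm ℤ (u : 𝓞 K) = 1 := by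
  have hnonneg := norm_nonneg_of_sq_eq hd hs (u : 𝓞 K)
  have hunit := Int.isUnit_iff.mp (u.isUnit.map (Algebra.norm ℤ))
  omega

lemma unit_pow_four_eq_one_or (hd : d < 0) (hs : s ^ 2 = algebraMap ℚ K d) (u : (𝓞 K)ˣ) :
    u ^ 4 = 1 ∨ u ^ 6 = 1 ∧ ∃ b : ℚ, d * b ^ 2 = -3 := by
  have htr := trace_sq_le_four_mul_norm hd hs (u : 𝓞 K)
  have hquad := sq_eq_trace_mul_sub_norm ℤ (u : 𝓞 K)
  obtain ⟨b, hb⟩ := exists_int_trace_sq_sub_four_mul_norm_eq hd hs (u : 𝓞 K)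
  rw [norm_unit_eq_one hd hs u] at htr hquad hb
  simp only [Units.ext_iff, Units.val_pow_eq_pow_val, Units.val_one]
  refine (pow_four_eq_one_or_of_sq_eq (by simpa using hquad) htr).imp_right
    (And.imp_right fun ht ↦ ⟨b, ?_⟩)
  have ht_cast : (Algebra.trace ℤ (𝓞 K) (u : 𝓞 K) : ℚ) ^ 2 = 1 := mod_cast ht
  push_cast at hb
  linear_combination ht_cast - hb

lemma exists_pow_eq_unit (hd : d < 0) (hs : s ^ 2 = algebraMap ℚ K d) {p : ℕ} (hp : p.Prime)
    (hodd : Odd p) (h3 : p = 3 → ∀ b : ℚ, d * b ^ 2 ≠ -3) (u : (𝓞 K)ˣ) :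
    ∃ v : (𝓞 K)ˣ, v ^ p = u := by
  have h2 : p.Coprime 2 := Nat.coprime_two_right.mpr hodd
  have hcop : p.Coprime (orderOf u) := by
    rcases unit_pow_four_eq_one_or hd hs u with h | ⟨h, b, hb⟩
    · exact .of_dvd_right (orderOf_dvd_of_pow_eq_one h) (h2.pow_right 2)
    · have hcop3 : p.Coprime 3 := (Nat.coprime_primes hp Nat.prime_three).mpr fun hp3 ↦ h3 hp3 b hb
      exact .of_dvd_right (orderOf_dvd_of_pow_eq_one h) (h2.mul_right hcop3)
  obtain ⟨m, hm⟩ := exists_pow_eq_self_of_coprime hcop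
  exact ⟨u ^ m, by rw [← pow_mul, mul_comm, pow_mul, hm]⟩

end ImaginaryQuadraticField

section Dedekind

variable {R : Type*} [CommRing R] [IsDedekindDomain R]

open nonZeroDivisors

lemma exists_ideal_pow_eq_span {a b c : R} {n : ℕ} (hab : IsCoprime a b) (h : a * b = c ^ n) :
    ∃ I : Ideal R, I ^ n = Ideal.span {a} := by
  obtain ⟨I, hI⟩ := exists_eq_pow_of_mul_eq_pow_of_coprime (c := Ideal.span {c})
    ((Ideal.isCoprime_span_singleton_iff a b).mpr hab)
    (by rw [Ideal.span_singleton_mul_span_singleton, h, Ideal.span_singleton_pow])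
  exact ⟨I, hI.symm⟩

lemma mk0_pow_eq_one_iff (I : (Ideal R)⁰) (j : ℕ) :
    ClassGroup.mk0 I ^ j = 1 ↔ ((I : Ideal R) ^ j).IsPrincipal := by
  rw [← map_pow]
  exact ClassGroup.mk0_eq_one_iff (I ^ j).2

lemma exists_associated_pow_of_mk0_pow_eq_one {I : (Ideal R)⁰} {a : R} {m p : ℕ}
    (hI : (I : Ideal R) ^ (m * p) = Ideal.span {a}) (hm : ClassGroup.mk0 I ^ m = 1) :
    ∃ b : R, Associated (b ^ p) a := by
  obtain ⟨b, hb⟩ := (mk0_pow_eq_one_iff I m).mp hm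
  refine ⟨b, Ideal.span_singleton_eq_span_singleton.mp ?_⟩
  rw [← Ideal.span_singleton_pow, ← hI, pow_mul, hb]

end Dedekind

section ClassGroup

lemma two_mul_sub_one_sq_eq {K : Type*} [Field K] [CharZero K] {α : 𝓞 K} {m : ℤ}
    (hα : α * (1 - α) = m) : (2 * α - 1 : K) ^ 2 = algebraMap ℚ K (1 - 4 * m) := by
  have h := congrArg (algebraMap (𝓞 K) K) hα
  simp only [map_mul, map_sub, map_one, map_intCast, map_ofNat] at h ⊢
  linear_combination -4 * h

variable {K : Type*} [Field K] [NumberField K] [Algebra.IsQuadraticExtension ℚ K] {α : 𝓞 K} {m : ℤ}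

lemma trace_eq_one_of_mul_one_sub_eq (hm : 0 < m) (hα : α * (1 - α) = m) :
    Algebra.trace ℤ (𝓞 K) α = 1 := by
  have hs := two_mul_sub_one_sq_eq hα
  have htr := trace_eq_zero_of_sq_eq_algebraMap
    (notMem_range_of_sq_eq_of_neg (mod_cast (by omega : 1 - 4 * m < 0)) hs) hs
  rw [map_sub, two_mul, map_add, trace_one_eq_two, ← Algebra.coe_trace_int] at htr
  exact_mod_cast (by linarith : (Algebra.trace ℤ (𝓞 K) α : ℚ) = 1)

lemma norm_eq_of_mul_one_sub_eq (hm : 0 < m) (hα : α * (1 - α) = m) :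
    Algebra.norm ℤ α = m := by
  have h := sq_eq_trace_mul_sub_norm ℤ α
  rw [trace_eq_one_of_mul_one_sub_eq hm hα, map_one, one_mul] at h
  apply FaithfulSMul.algebraMap_injective ℤ (𝓞 K)
  simp only [algebraMap_int_eq, eq_intCast] at h ⊢
  linear_combination h + hα

lemma pow_ne_of_mul_one_sub_eq (hm : 1 < m) {p : ℕ} (hp : p.Prime) (hodd : Odd p)
    (hα : α * (1 - α) = m) (γ : 𝓞 K) : γ ^ p ≠ α := by
  rintro rfl
  have hm0 : 0 < m := by omega
  have hnorm : 1 < Algebra.norm ℤ γ := by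
    have hγ := norm_nonneg_of_sq_eq (mod_cast (by omega : 1 - 4 * m < 0))
      (two_mul_sub_one_sq_eq hα) γ
    rwa [← one_lt_pow_iff_of_nonneg hγ hp.ne_zero, ← map_pow, norm_eq_of_mul_one_sub_eq hm0 hα]
  refine eval_dickson_one_ne_one hp hodd hnorm (Algebra.trace ℤ (𝓞 K) γ) ?_
  rw [← trace_pow_eq_eval_dickson, trace_eq_one_of_mul_one_sub_eq hm0 hα]

lemma not_associated_pow_of_mul_one_sub_eq {n : ℕ} (hn : n ≠ 0) {U : ℤ} (hU : 2 ≤ U) {p : ℕ}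
    (hp : p.Prime) (hodd : Odd p) (hpn : p ∣ n) (hα : α * (1 - α) = U ^ n) (β : 𝓞 K) :
    ¬ Associated (β ^ p) α := by
  rintro ⟨u, hu⟩
  have hα_cast : α * (1 - α) = (U ^ n : ℤ) := by rw [hα, Int.cast_pow]
  have hUn : 1 < U ^ n := one_lt_pow₀ (by omega) hn
  have h3 : p = 3 → ∀ b : ℚ, (1 - 4 * ((U ^ n : ℤ) : ℚ)) * b ^ 2 ≠ -3 := by
    rintro rfl
    obtain ⟨m, rfl⟩ := hpn
    have hUm : (U : ℚ) ^ m ≠ 1 :=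
      (one_lt_pow₀ (mod_cast (by omega : 1 < U)) (right_ne_zero_of_mul hn)).ne'
    simpa [mul_comm 3 m, pow_mul] using one_sub_four_mul_cube_mul_sq_ne hUm
  obtain ⟨v, rfl⟩ := exists_pow_eq_unit (mod_cast (by omega : 1 - 4 * U ^ n < 0))
    (two_mul_sub_one_sq_eq hα_cast) hp hodd h3 u
  refine pow_ne_of_mul_one_sub_eq hUn hp hodd hα_cast (β * v) ?_
  rw [mul_pow, ← hu, Units.val_pow_eq_pow_val]

theorem exists_orderOf_classGroup_eq {n : ℕ} (hn : Odd n) {U : ℤ} (hU : 2 ≤ U)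
    (hα : α * (1 - α) = U ^ n) :
    ∃ C : ClassGroup (𝓞 K), orderOf C = n := by
  obtain ⟨I, hI⟩ := exists_ideal_pow_eq_span ⟨1, 1, by ring⟩ hα
  have hα0 : α ≠ 0 := by
    rintro rfl
    have hU0 : (U : 𝓞 K) ≠ 0 := mod_cast (by omega)
    exact pow_ne_zero n hU0 (by rw [← hα, zero_mul])
  have hI0 : I ≠ 0 := by
    rintro rfl
    rw [zero_pow hn.pos.ne', eq_comm, Ideal.zero_eq_bot, Ideal.span_singleton_eq_bot] at hI
    exact hα0 hI
  let J : nonZeroDivisors (Ideal (𝓞 K)) := ⟨I, mem_nonZeroDivisors_of_ne_zero hI0⟩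
  refine ⟨ClassGroup.mk0 J, orderOf_eq_of_pow_and_pow_div_prime hn.pos
    ((mk0_pow_eq_one_iff J n).mpr ⟨α, hI⟩) fun p hp hpn hJ ↦ ?_⟩
  obtain ⟨β, hβ⟩ := exists_associated_pow_of_mk0_pow_eq_one (I := J) (p := p)
    (by rwa [Nat.div_mul_cancel hpn]) hJ
  exact not_associated_pow_of_mul_one_sub_eq hn.pos.ne' hU hp (hn.of_dvd_nat hpn) hpn hα β hβ

end ClassGroup

section Adjoin

variable {F L : Type*} [Field F] [Field L] [Algebra F L] {s : L} {d : F}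

open IntermediateField in
lemma isQuadraticExtension_adjoin_of_sq_eq (hs : s ∉ (algebraMap F L).range)
    (hd : s ^ 2 = algebraMap F L d) : Algebra.IsQuadraticExtension F F⟮s⟯ := by
  have hirr : Irreducible (X ^ 2 - C d) :=
    X_pow_sub_C_irreducible_of_prime Nat.prime_two fun b hb ↦ by
      rcases sq_eq_sq_iff_eq_or_eq_neg.mp (hd.trans (hb ▸ map_pow (algebraMap F L) b 2)) with h | h
      · exact hs ⟨b, h.symm⟩
      · exact hs ⟨-b, by rw [map_neg, h]⟩
  have hmin := minpoly.eq_of_irreducible_of_monic hirr (x := s) (by simp [hd])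
    (monic_X_pow_sub_C d two_ne_zero)
  have hint : IsIntegral F s := ⟨_, monic_X_pow_sub_C d two_ne_zero, by simp [hd]⟩
  exact ⟨by rw [adjoin.finrank hint, ← hmin, natDegree_X_pow_sub_C]⟩

end Adjoin

lemma isQuadraticExtension_Qsqrt {D : ℤ} (hD : D < 0) :
    Algebra.IsQuadraticExtension ℚ (Qsqrt D) := by
  have hs : ((D : ℂ) ^ ((1 : ℂ) / 2)) ^ 2 = algebraMap ℚ ℂ D := by simp
  exact isQuadraticExtension_adjoin_of_sq_eq (notMem_range_of_sq_eq_of_neg (mod_cast hD) hs) hs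

lemma exists_sq_eq_Qsqrt (D : ℤ) : ∃ s : Qsqrt D, s ^ 2 = D :=
  ⟨⟨_, IntermediateField.mem_adjoin_simple_self ℚ _⟩, Subtype.ext (by simp)⟩

lemma exists_mul_one_sub_eq_of_sq_eq {K : Type*} [Field K] [CharZero K] {s : K} {m : ℤ}
    (hs : s ^ 2 = 1 - 4 * m) : ∃ α : 𝓞 K, α * (1 - α) = m := by
  have hroot : (1 + s) / 2 * (1 - (1 + s) / 2) = m := by
    linear_combination -hs / 4
  have hint : IsIntegral ℤ ((1 + s) / 2) := by
    refine ⟨X ^ 2 - X + C m, by monicity!, ?_⟩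
    rw [eval₂_add, eval₂_sub, eval₂_pow, eval₂_X, eval₂_C, algebraMap_int_eq, eq_intCast]
    linear_combination -hroot
  let α : 𝓞 K := ⟨_, hint⟩
  refine ⟨α, RingOfIntegers.coe_injective ?_⟩
  rw [map_mul, map_sub, map_one, map_intCast]
  exact hroot

theorem classNumber_dvd_d_add_one_general {n : ℕ} (hn : Odd n) {U : ℤ} (hU : 2 ≤ U) :
    n ∣ classNumSqrt (1 - 4 * U ^ n) := by
  have hD : 1 - 4 * U ^ n < 0 := by
    have hUn : 1 ≤ U ^ n := one_le_pow₀ (by omega)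
    omega
  have := isQuadraticExtension_Qsqrt hD
  have : NumberField (Qsqrt (1 - 4 * U ^ n)) := { to_finiteDimensional := inferInstance }
  obtain ⟨s, hs⟩ := exists_sq_eq_Qsqrt (1 - 4 * U ^ n)
  obtain ⟨α, hα⟩ := exists_mul_one_sub_eq_of_sq_eq (s := s) (m := U ^ n) (by simpa using hs)
  obtain ⟨C, hC⟩ := exists_orderOf_classGroup_eq hn hU (by simpa using hα)
  calc n = orderOf C := hC.symm
    _ ∣ classNumSqrt (1 - 4 * U ^ n) := orderOf_dvd_natCard C

/-- Let `n ≥ 3` be an odd integer, `k ≥ 2` an integer, and `d = 4(1 − 4kⁿ)ⁿ`. Then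
`d + 1 = 1 − 4(4kⁿ − 1)ⁿ`, and `n` divides the class number of `ℚ(√(d + 1))`. -/
theorem classNumber_dvd_d_add_one
    (n : ℕ) (hn : 3 ≤ n) (hnodd : Odd n) (k : ℤ) (hk : 2 ≤ k)
    (d : ℤ) (hd : d = 4 * (1 - 4 * k ^ n) ^ n) :
    d + 1 = 1 - 4 * (4 * k ^ n - 1) ^ n ∧ n ∣ classNumSqrt (d + 1) := by
  have hdU : d + 1 = 1 - 4 * (4 * k ^ n - 1) ^ n := by
    rw [hd, ← neg_sub, hnodd.neg_pow]; ring
  have hkn : 1 ≤ k ^ n := one_le_pow₀ (by omega)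
  exact ⟨hdU, hdU ▸ classNumber_dvd_d_add_one_general hnodd (by omega)⟩
end

section
/- For any odd positive integer n and any positive integer m, there are infinitely many negative integers d such that both ideal class groups of the imaginary quadratic fields ℚ(√d) and ℚ(√(d + m)) contain an element of order n. -/
/-!
If `s ^ 2 - c ^ 2 * d = U ^ n` with `U` prime to `2 * s`, then `s + c√d` and `s - c√d` are coprime
with product `U ^ n`, so the ideal generated by `s + c√d` is an `n`-th power `I ^ n`, and the class
of `I` has order `n` unless `s + c√d` is, up to a unit, a `p`-th power for some prime `p ∣ n`. Away
from `ℚ(√-3)` units have order dividing `4`, so they are themselves `p`-th powers; hence suppose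
that `s + c√d = γ ^ p`. With `b` and `V` the trace and norm of `γ`, adding the conjugate equation
gives `D_p(b, V) = 2 * s` for the Dickson polynomial `D_p`. It is divisible by `b`, whence
`|b| ≤ |2 * s|`, and congruent to `b ^ p - p * V * b ^ (p - 2)` modulo `V ^ 2`. If `V` is large and
prime to `2 * s * p`, this forces first `b ^ p = 2 * s` and then `V ∣ p * b ^ (p - 2)`, which is
absurd.

Both fields are reached with the same `U` because `(4 * m + 1) ^ 2 - (4 * m - 1) ^ 2 = 4 ^ 2 * m`.
-/

open Polynomial IntermediateField NumberField ComplexConjugate Filter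

section Dickson

variable {R : Type*} [CommRing R]

lemma eval_add_dickson_mul (x y : R) (n : ℕ) :
    (dickson 1 (x * y) n).eval (x + y) = x ^ n + y ^ n := by
  induction n using Nat.twoStepInduction with
  | zero =>
    simp only [dickson_zero, Nat.cast_one, eval_sub, eval_ofNat, eval_one, pow_zero]
    ring
  | one => simp
  | more n ih ih' =>
    simp only [dickson_add_two, eval_sub, eval_mul, eval_X, eval_C, ih, ih']
    ring

lemma X_dvd_dickson_of_odd (k : ℕ) (a : R) {n : ℕ} (hn : Odd n) : X ∣ dickson k a n := by
  obtain ⟨j, rfl⟩ := hn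
  induction j with
  | zero => simp
  | succ j ih =>
    rw [mul_add, add_right_comm, mul_one, dickson_add_two]
    exact dvd_sub (dvd_mul_right _ _) (ih.mul_left _)

lemma C_sq_dvd_dickson_sub (a : R) (n : ℕ) :
    C a ^ 2 ∣ dickson 1 a (n + 2) - (X ^ (n + 2) - ((n : R[X]) + 2) * C a * X ^ n) := by
  induction n using Nat.twoStepInduction with
  | zero => exact ⟨0, by simp [dickson]; ring⟩
  | one => exact ⟨0, by simp [dickson]; ring⟩
  | more n ih ih' =>
    obtain ⟨f, hf⟩ := ih
    obtain ⟨g, hg⟩ := ih'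
    refine ⟨X * g - C a * f + ((n : R[X]) + 2) * X ^ n, ?_⟩
    rw [dickson_add_two]
    push_cast at hg ⊢
    linear_combination X * hg - C a * hf

lemma eval_dickson_ne {b V t : ℤ} {p : ℕ} (hp : Odd p) (hp_one : p ≠ 1) (ht : t ≠ 0)
    (hVp : IsCoprime V p) (hVt : IsCoprime V t) (hlt : |t| ^ p + |t| < V) :
    (dickson 1 V p).eval b ≠ t := by
  intro h
  have hbt : b ∣ t := by simpa [h] using eval_dvd (x := b) (X_dvd_dickson_of_odd 1 V hp)
  obtain ⟨k, rfl⟩ : ∃ k, p = k + 2 := Nat.exists_eq_add_of_le' (by have := hp.pos; lia)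
  obtain ⟨q, hq⟩ : V ^ 2 ∣ t - (b ^ (k + 2) - (k + 2) * V * b ^ k) := by
    simpa [h, -dickson_add_two] using eval_dvd (x := b) (C_sq_dvd_dickson_sub V k)
  have hb_le : |b| ≤ |t| := Int.le_of_dvd (abs_pos.2 ht) ((abs_dvd_abs b t).2 hbt)
  have hb_pow : |b ^ (k + 2)| ≤ |t| ^ (k + 2) := by
    rw [abs_pow]
    gcongr
  have ht_eq : t - b ^ (k + 2) = 0 := by
    refine Int.eq_zero_of_abs_lt_dvd (m := V) ⟨V * q - (k + 2) * b ^ k, ?_⟩ ?_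
    · linear_combination hq
    · calc |t - b ^ (k + 2)| ≤ |t| + |b ^ (k + 2)| := abs_sub _ _
        _ < V := by linarith
  have hV_pos : 1 < V := by
    have := pow_pos (abs_pos.2 ht) (k + 2)
    have := abs_pos.2 ht
    lia
  have hV_dvd : V ∣ (k + 2 : ℕ) * b ^ k := by
    refine ⟨q, mul_left_cancel₀ (by lia : V ≠ 0) ?_⟩
    push_cast
    linear_combination hq - ht_eq
  have hV_unit : IsUnit V :=
    ((hVt.of_isCoprime_of_dvd_right hbt).pow_right).isUnit_of_dvd' dvd_rfl
      (hVp.dvd_of_dvd_mul_left hV_dvd)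
  exact hV_pos.ne' ((Int.isUnit_iff.1 hV_unit).resolve_right (by lia))

end Dickson

lemma exists_pow_eq_of_associated_pow {M : Type*} [CommMonoid M] {a b : M} {p k : ℕ}
    (hunit : ∀ u : Mˣ, u ^ k = 1) (hpk : p.Coprime k) (h : Associated (b ^ p) a) :
    ∃ c, c ^ p = a := by
  obtain ⟨u, rfl⟩ := h
  obtain ⟨j, hj⟩ := exists_pow_eq_self_of_coprime
    (hpk.coprime_dvd_right (orderOf_dvd_of_pow_eq_one (hunit u)))
  exact ⟨b * (u ^ j : Mˣ), by rw [mul_pow, ← Units.val_pow_eq_pow_val, pow_right_comm, hj]⟩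

lemma isCoprime_add_sub {R : Type*} [CommRing R] {x y : R}
    (h : IsCoprime ((x + y) * (x - y)) (2 * x)) : IsCoprime (x + y) (x - y) := by
  obtain ⟨a, b, hab⟩ := h
  exact ⟨a * (x - y) + b, b, by linear_combination hab⟩

lemma exists_orderOf_classGroup_eq_of_mul_eq_pow {R : Type*} [CommRing R] [IsDedekindDomain R]
    {x y w : R} {n : ℕ} (hn : 0 < n) (hx : x ≠ 0) (hxy : IsCoprime x y) (hw : x * y = w ^ n)
    (hpow : ∀ p, p.Prime → p ∣ n → ∀ z, ¬ Associated (z ^ p) x) :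
    ∃ a : ClassGroup R, orderOf a = n := by
  obtain ⟨I, hI⟩ : ∃ I : Ideal R, Ideal.span {x} = I ^ n := by
    classical
    let : GCDMonoid (Ideal R) := UniqueFactorizationMonoid.toGCDMonoid _
    refine exists_eq_pow_of_mul_eq_pow_of_coprime (b := Ideal.span {y}) (c := Ideal.span {w})
      ((Ideal.isCoprime_span_singleton_iff x y).2 hxy) ?_
    rw [Ideal.span_singleton_mul_span_singleton, Ideal.span_singleton_pow, hw]
  have hI_ne : I ≠ 0 := by
    rintro rfl
    rw [zero_pow hn.ne'] at hI
    exact hx (Ideal.span_singleton_eq_bot.1 hI)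
  have hI_mem : I ∈ nonZeroDivisors (Ideal R) := mem_nonZeroDivisors_of_ne_zero hI_ne
  have mk0_pow_eq_one_iff (k : ℕ) : ClassGroup.mk0 ⟨I, hI_mem⟩ ^ k = 1 ↔ (I ^ k).IsPrincipal := by
    rw [← map_pow]
    exact ClassGroup.mk0_eq_one_iff (I := I ^ k) (pow_mem hI_mem k)
  refine ⟨ClassGroup.mk0 ⟨I, hI_mem⟩, orderOf_eq_of_pow_and_pow_div_prime hn ?_ ?_⟩
  · exact (mk0_pow_eq_one_iff n).2 ⟨x, hI.symm⟩
  · intro p hp hpn hone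
    obtain ⟨z, hz : I ^ (n / p) = Ideal.span {z}⟩ := (mk0_pow_eq_one_iff _).1 hone
    refine hpow p hp hpn z (Ideal.span_singleton_eq_span_singleton.1 ?_)
    rw [← Ideal.span_singleton_pow, ← hz, ← pow_mul, Nat.div_mul_cancel hpn, hI]

lemma exists_eq_add_mul_of_mem_adjoin_simple {F E : Type*} [Field F] [Field E] [Algebra F E]
    {a : F} {δ z : E} (hδ : δ ^ 2 = algebraMap F E a) (hz : z ∈ F⟮δ⟯) :
    ∃ x y : F, z = algebraMap F E x + algebraMap F E y * δ := by
  have hδ_alg : IsAlgebraic F δ := .of_pow two_pos (hδ ▸ isAlgebraic_algebraMap a)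
  rw [← mem_toSubalgebra, adjoin_simple_toSubalgebra_of_isAlgebraic hδ_alg] at hz
  induction hz using Algebra.adjoin_induction with
  | mem w hw => exact ⟨0, 1, by simpa using hw⟩
  | algebraMap x => exact ⟨x, 0, by simp⟩
  | add w w' _ _ h h' =>
    obtain ⟨x, y, rfl⟩ := h
    obtain ⟨x', y', rfl⟩ := h'
    exact ⟨x + x', y + y', by simp only [map_add]; ring⟩
  | mul w w' _ _ h h' =>
    obtain ⟨x, y, rfl⟩ := h
    obtain ⟨x', y', rfl⟩ := h'
    refine ⟨x * x' + y * y' * a, x * y' + y * x', ?_⟩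
    simp only [map_add, map_mul, ← hδ]
    ring

lemma re_eq_zero_of_sq_neg {z : ℂ} {r : ℝ} (hr : r < 0) (hz : z ^ 2 = r) : z.re = 0 := by
  have hre : z.re * z.re - z.im * z.im = r := by simpa [sq] using congrArg Complex.re hz
  have him : z.re * z.im + z.im * z.re = 0 := by simpa [sq] using congrArg Complex.im hz
  refine (mul_eq_zero.1 (by linarith : z.re * z.im = 0)).resolve_right fun h => ?_
  rw [h] at hre
  nlinarith [mul_self_nonneg z.re]

lemma pow_four_eq_one_or_sq_eq_neg_three {z : ℂ} {b : ℤ} (hnorm : z * conj z = 1)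
    (htrace : z + conj z = b) : z ^ 4 = 1 ∨ (2 * z - b) ^ 2 = -3 := by
  have hquad : z ^ 2 - b * z + 1 = 0 := by rw [← htrace]; linear_combination -hnorm
  have hb_sq : (b : ℝ) ^ 2 ≤ 4 := by
    have hre : 2 * z.re = b := by exact_mod_cast (Complex.add_conj z).symm.trans htrace
    have him : z.re * z.re + z.im * z.im = 1 := by
      exact_mod_cast (Complex.mul_conj z).symm.trans hnorm
    rw [← hre]
    nlinarith [mul_self_nonneg z.im]
  obtain ⟨hb_lower, hb_upper⟩ : -2 ≤ b ∧ b ≤ 2 :=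
    abs_le_of_sq_le_sq' (by exact_mod_cast hb_sq) two_pos.le
  interval_cases b <;> push_cast at hquad ⊢
  · have hz : (z + 1) ^ 2 = 0 := by linear_combination hquad
    obtain rfl := eq_neg_of_add_eq_zero_left (pow_eq_zero_iff two_ne_zero |>.1 hz)
    exact .inl (by norm_num)
  · exact .inr (by linear_combination 4 * hquad)
  · exact .inl (by linear_combination (z ^ 2 - 1) * hquad)
  · exact .inr (by linear_combination 4 * hquad)
  · have hz : (z - 1) ^ 2 = 0 := by linear_combination hquad
    obtain rfl := sub_eq_zero.1 (pow_eq_zero_iff two_ne_zero |>.1 hz)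
    exact .inl (by norm_num)

lemma isIntegral_of_sq_eq_intCast {R : Type*} [Ring R] {d : ℤ} {x : R} (hx : x ^ 2 = d) :
    IsIntegral ℤ x :=
  .of_pow two_pos (hx ▸ isIntegral_algebraMap)

section ImaginaryQuadratic

variable {d : ℤ} {δ : ℂ}

lemma numberField_adjoin_of_sq_eq_intCast (hδ : δ ^ 2 = d) : NumberField ℚ⟮δ⟯ where
  to_finiteDimensional :=
    adjoin.finiteDimensional (isIntegral_of_sq_eq_intCast hδ).tower_top

lemma conj_eq_neg_of_sq_neg (hd : d < 0) (hδ : δ ^ 2 = d) : conj δ = -δ := by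
  have hre : δ.re = 0 :=
    re_eq_zero_of_sq_neg (r := d) (by exact_mod_cast hd) (by exact_mod_cast hδ)
  exact Complex.ext (by simp [hre]) (by simp)

lemma exists_rat_eq_add_mul (hδ : δ ^ 2 = d) {z : ℂ} (hz : z ∈ ℚ⟮δ⟯) :
    ∃ x y : ℚ, z = x + y * δ :=
  exists_eq_add_mul_of_mem_adjoin_simple (a := (d : ℚ)) (by simpa using hδ) hz

lemma exists_int_trace_norm (hd : d < 0) (hδ : δ ^ 2 = d) {z : ℂ} (hz : z ∈ ℚ⟮δ⟯)
    (hz_int : IsIntegral ℤ z) : ∃ b c : ℤ, z + conj z = b ∧ z * conj z = c := by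
  have hconj_int : IsIntegral ℤ (conj z) := hz_int.map (starRingEnd ℂ).toIntAlgHom
  obtain ⟨x, y, hxy⟩ := exists_rat_eq_add_mul hδ hz
  have hconj : conj z = x - y * δ := by
    rw [hxy, map_add, map_mul, map_ratCast, map_ratCast, conj_eq_neg_of_sq_neg hd hδ]
    ring
  obtain ⟨b, hb⟩ := (hz_int.add hconj_int).exists_int_iff_exists_rat.1
    ⟨2 * x, by rw [hconj, hxy]; push_cast; ring⟩
  obtain ⟨c, hc⟩ := (hz_int.mul hconj_int).exists_int_iff_exists_rat.1
    ⟨x ^ 2 - y ^ 2 * d, by rw [hconj, hxy]; push_cast; linear_combination -(y : ℂ) ^ 2 * hδ⟩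
  exact ⟨b, c, hb, hc⟩

lemma sq_ne_neg_three_of_mem_adjoin (hd : d < 0) (hd_three : ¬ 3 ∣ d) (hδ : δ ^ 2 = d) {z : ℂ}
    (hz : z ∈ ℚ⟮δ⟯) : z ^ 2 ≠ -3 := by
  intro hz_sq
  obtain ⟨x, y, rfl⟩ := exists_rat_eq_add_mul hδ hz
  have hδ_re : δ.re = 0 :=
    re_eq_zero_of_sq_neg (r := d) (by exact_mod_cast hd) (by exact_mod_cast hδ)
  have hx : x = 0 := by
    have hre := re_eq_zero_of_sq_neg (r := -3) (by norm_num) (by exact_mod_cast hz_sq)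
    simpa [hδ_re] using hre
  have hy : y ^ 2 * d = -3 := by
    have : (y : ℂ) ^ 2 * d = -3 := by rw [← hz_sq, hx, ← hδ]; push_cast; ring
    exact_mod_cast this
  have hval : 2 * padicValRat 3 y = 1 := by
    have hy_ne : y ≠ 0 := by rintro rfl; norm_num at hy
    have hd_val : padicValRat 3 (d : ℚ) = 0 := by
      simp [padicValInt.eq_zero_of_not_dvd hd_three]
    have h3 : padicValRat 3 (-3 : ℚ) = 1 := by
      rw [padicValRat.neg]; exact padicValRat.self (by norm_num)
    have := congrArg (padicValRat 3) hy
    rwa [padicValRat.mul (pow_ne_zero 2 hy_ne) (by exact_mod_cast hd.ne), padicValRat.pow,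
      hd_val, h3, add_zero] at this
  lia

lemma pow_four_eq_one_of_mul_eq_one (hd : d < 0) (hd_three : ¬ 3 ∣ d) (hδ : δ ^ 2 = d) {u v : ℂ}
    (hu : u ∈ ℚ⟮δ⟯) (hv : v ∈ ℚ⟮δ⟯) (hu_int : IsIntegral ℤ u) (hv_int : IsIntegral ℤ v)
    (huv : u * v = 1) : u ^ 4 = 1 := by
  obtain ⟨b, c, hb, hc⟩ := exists_int_trace_norm hd hδ hu hu_int
  obtain ⟨-, c', -, hc'⟩ := exists_int_trace_norm hd hδ hv hv_int
  have hc_nonneg : 0 ≤ c := by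
    have : Complex.normSq u = c := by exact_mod_cast (Complex.mul_conj u).symm.trans hc
    exact_mod_cast this ▸ Complex.normSq_nonneg u
  have hcc' : c * c' = 1 := by
    have : (c * c' : ℂ) = 1 := by
      rw [← hc, ← hc', mul_mul_mul_comm, ← map_mul, huv, map_one, mul_one]
    exact_mod_cast this
  obtain rfl : c = 1 := Int.eq_one_of_mul_eq_one_right hc_nonneg hcc'
  refine (pow_four_eq_one_or_sq_eq_neg_three (by simpa using hc) hb).resolve_right ?_
  exact sq_ne_neg_three_of_mem_adjoin hd hd_three hδ
    (sub_mem (mul_mem (ofNat_mem _ 2) hu) (intCast_mem _ b))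

lemma isIntegral_coe_coe (x : 𝓞 ℚ⟮δ⟯) : IsIntegral ℤ ((x : ℚ⟮δ⟯) : ℂ) :=
  (RingOfIntegers.isIntegral_coe x).algebraMap

lemma units_pow_four_eq_one (hd : d < 0) (hd_three : ¬ 3 ∣ d) (hδ : δ ^ 2 = d)
    (u : (𝓞 ℚ⟮δ⟯)ˣ) : u ^ 4 = 1 := by
  have hu : ((u : ℚ⟮δ⟯) : ℂ) ^ 4 = 1 :=
    pow_four_eq_one_of_mul_eq_one hd hd_three hδ (v := ((u⁻¹ : (𝓞 ℚ⟮δ⟯)ˣ) : ℚ⟮δ⟯))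
      (SetLike.coe_mem _) (SetLike.coe_mem _)
      (isIntegral_coe_coe _) (isIntegral_coe_coe _)
      (by exact_mod_cast congrArg (fun x : 𝓞 ℚ⟮δ⟯ => ((x : ℚ⟮δ⟯) : ℂ)) u.mul_inv)
  exact Units.ext (RingOfIntegers.ext (Subtype.ext hu))

lemma pow_ne_add_mul_of_sq_sub_sq_mul_eq_pow (hd : d < 0) (hδ : δ ^ 2 = d) {s c W : ℤ} {p : ℕ}
    (hp : Odd p) (hp_one : p ≠ 1) (hs : s ≠ 0) (hW : s ^ 2 - c ^ 2 * d = W ^ p)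
    (hWp : IsCoprime W p) (hWs : IsCoprime W (2 * s)) (hlt : |2 * s| ^ p + |2 * s| < W)
    {γ : ℂ} (hγ : γ ∈ ℚ⟮δ⟯) (hγ_int : IsIntegral ℤ γ) : γ ^ p ≠ s + c * δ := by
  intro hpow
  obtain ⟨b, V, hb, hV⟩ := exists_int_trace_norm hd hδ hγ hγ_int
  have hpow_conj : conj γ ^ p = s - c * δ := by
    rw [← map_pow, hpow, map_add, map_mul, map_intCast, map_intCast,
      conj_eq_neg_of_sq_neg hd hδ]
    ring
  have hVW : V = W := by
    refine hp.strictMono_pow.injective ?_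
    have : (V : ℂ) ^ p = W ^ p := by
      have hW' : (s : ℂ) ^ 2 - c ^ 2 * d = W ^ p := by exact_mod_cast hW
      rw [← hV, mul_pow, hpow, hpow_conj, ← hW', ← hδ]
      ring
    exact_mod_cast this
  subst hVW
  refine eval_dickson_ne (b := b) hp hp_one (mul_ne_zero two_ne_zero hs) hWp hWs hlt ?_
  have : (((dickson 1 V p).eval b : ℤ) : ℂ) = 2 * s := by
    calc (((dickson 1 V p).eval b : ℤ) : ℂ)
      _ = (dickson 1 (γ * conj γ) p).eval (γ + conj γ) := by
        rw [hb, hV, ← eq_intCast (Int.castRingHom ℂ) V, ← map_dickson, eval_intCast_map]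
        simp
      _ = γ ^ p + conj γ ^ p := eval_add_dickson_mul _ _ _
      _ = 2 * s := by rw [hpow, hpow_conj]; ring
  exact_mod_cast this

lemma pow_ne_add_mul_of_sq_sub_sq_mul_eq_pow_of_dvd (hd : d < 0) (hδ : δ ^ 2 = d) {s c U : ℤ}
    {n p : ℕ} (hn : Odd n) (hp : p ≠ 1) (hpn : p ∣ n) (hs : s ≠ 0)
    (hU : s ^ 2 - c ^ 2 * d = U ^ n) (hUn : IsCoprime U n) (hUs : IsCoprime U (2 * s))
    (hlt : |2 * s| ^ n + |2 * s| < U) {γ : ℂ} (hγ : γ ∈ ℚ⟮δ⟯) (hγ_int : IsIntegral ℤ γ) :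
    γ ^ p ≠ s + c * δ := by
  obtain ⟨k, rfl⟩ := hpn
  have hU_pos : 0 < U := lt_of_le_of_lt (by positivity) hlt
  have hk : k ≠ 0 := right_ne_zero_of_mul hn.pos.ne'
  refine pow_ne_add_mul_of_sq_sub_sq_mul_eq_pow (W := U ^ k) hd hδ
    (hn.of_dvd_nat ⟨k, rfl⟩) hp hs ?_ ?_ ?_ ?_ hγ hγ_int
  · rw [hU, ← pow_mul, mul_comm]
  · exact (hUn.of_isCoprime_of_dvd_right ⟨(k : ℤ), by push_cast; rfl⟩).pow_left
  · exact hUs.pow_left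
  · calc |2 * s| ^ p + |2 * s| ≤ |2 * s| ^ (p * k) + |2 * s| := by
          gcongr
          · exact Int.one_le_abs (mul_ne_zero two_ne_zero hs)
          · exact Nat.le_mul_of_pos_right p (by lia)
      _ < U := hlt
      _ ≤ U ^ k := le_self_pow₀ hU_pos hk

theorem exists_orderOf_classGroup_adjoin_eq (hd : d < 0) (hd_three : ¬ 3 ∣ d) (hδ : δ ^ 2 = d)
    {n : ℕ} (hn : Odd n) {s c U : ℤ} (hs : s ≠ 0) (hU : s ^ 2 - c ^ 2 * d = U ^ n)
    (hUn : IsCoprime U n) (hUs : IsCoprime U (2 * s)) (hlt : |2 * s| ^ n + |2 * s| < U) :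
    ∃ x : ClassGroup (𝓞 ℚ⟮δ⟯), orderOf x = n := by
  have := numberField_adjoin_of_sq_eq_intCast hδ
  have hU_pos : 0 < U := lt_of_le_of_lt (by positivity) hlt
  have hgen : AdjoinSimple.gen ℚ δ ^ 2 = d := Subtype.ext (by simpa using hδ)
  let δ' : 𝓞 ℚ⟮δ⟯ := ⟨AdjoinSimple.gen ℚ δ, isIntegral_of_sq_eq_intCast hgen⟩
  have hδ' : δ' ^ 2 = d := RingOfIntegers.ext hgen
  have hmul : (s + c * δ') * (s - c * δ') = (U : 𝓞 ℚ⟮δ⟯) ^ n := by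
    have hU' : (s : 𝓞 ℚ⟮δ⟯) ^ 2 - c ^ 2 * d = U ^ n := by exact_mod_cast congrArg Int.cast hU
    linear_combination hU' - (c : 𝓞 ℚ⟮δ⟯) ^ 2 * hδ'
  have hcop : IsCoprime (s + c * δ') (s - c * δ') := by
    refine isCoprime_add_sub (hmul ▸ IsCoprime.pow_left ?_)
    exact_mod_cast hUs.intCast (R := 𝓞 ℚ⟮δ⟯)
  have hne : s + c * δ' ≠ 0 := by
    refine left_ne_zero_of_mul (hmul ▸ pow_ne_zero n ?_)
    exact_mod_cast hU_pos.ne'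
  refine exists_orderOf_classGroup_eq_of_mul_eq_pow hn.pos hne hcop hmul fun p hp hpn β hβ => ?_
  obtain ⟨γ, hγ⟩ := exists_pow_eq_of_associated_pow (units_pow_four_eq_one hd hd_three hδ)
    ((hn.of_dvd_nat hpn).coprime_two_right.pow_right 2) hβ
  refine pow_ne_add_mul_of_sq_sub_sq_mul_eq_pow_of_dvd hd hδ hn hp.ne_one hpn hs hU hUn hUs
    hlt (SetLike.coe_mem _) (isIntegral_coe_coe γ) ?_
  have := congrArg (algebraMap (𝓞 ℚ⟮δ⟯) ℂ) hγ
  rwa [map_pow, map_add, map_mul, map_intCast, map_intCast] at this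

end ImaginaryQuadratic

lemma isCoprime_of_modEq_neg_one {a k : ℤ} (h : a ≡ -1 [ZMOD k]) : IsCoprime a k := by
  obtain ⟨e, he⟩ := Int.modEq_iff_dvd.1 h
  exact ⟨-1, -e, by linear_combination he⟩

lemma pow_modEq_self_of_odd {N a : ℤ} {n : ℕ} (hn : Odd n) (ha : a ^ 2 ≡ 1 [ZMOD N]) :
    a ^ n ≡ a [ZMOD N] := by
  obtain ⟨l, rfl⟩ := hn
  rw [pow_succ, pow_mul]
  simpa only [one_pow, one_mul] using (ha.pow l).mul_right a

lemma frequently_modEq {N : ℤ} (hN : N ≠ 0) (a : ℤ) : ∃ᶠ x : ℤ in atTop, x ≡ a [ZMOD N] := by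
  refine frequently_atTop.2 fun B => ⟨a + |N| * |B - a|, ?_, ?_⟩
  · have := le_mul_of_one_le_left (abs_nonneg (B - a)) (Int.one_le_abs hN)
    linarith [le_abs_self (B - a)]
  · exact Int.add_modEq_left_iff.2 (((dvd_abs N N).2 dvd_rfl).mul_right _)

lemma frequently_modEq_and_modEq {M N : ℤ} (hM : M ≠ 0) (hN : N ≠ 0) (hMN : IsCoprime M N)
    (a b : ℤ) : ∃ᶠ x : ℤ in atTop, x ≡ a [ZMOD M] ∧ x ≡ b [ZMOD N] := by
  obtain ⟨u, v, huv⟩ := hMN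
  refine (frequently_modEq (mul_ne_zero hM hN) (b * (u * M) + a * (v * N))).mono
    fun x hx => ⟨?_, ?_⟩
  · refine (hx.of_mul_right N).trans (Int.modEq_iff_dvd.2 ⟨u * (a - b), ?_⟩)
    linear_combination -a * huv
  · refine (hx.of_mul_left M).trans (Int.modEq_iff_dvd.2 ⟨v * (b - a), ?_⟩)
    linear_combination -b * huv

lemma not_three_dvd_of_sq_sub_sq_mul_eq_pow {s c d U : ℤ} {n : ℕ} (hn : Odd n)
    (hU : U ≡ -1 [ZMOD 3]) (h : s ^ 2 - c ^ 2 * d = U ^ n) : ¬ 3 ∣ d := by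
  intro hd
  have hs : (s : ZMod 3) ^ 2 = -1 := by
    have h' : (s : ZMod 3) ^ 2 - c ^ 2 * d = U ^ n := by exact_mod_cast congrArg Int.cast h
    have hU' : (U : ZMod 3) = -1 := by exact_mod_cast (ZMod.intCast_eq_intCast_iff U (-1) 3).2 hU
    have hd' : (d : ZMod 3) = 0 := (ZMod.intCast_zmod_eq_zero_iff_dvd d 3).2 hd
    simpa [hU', hd', hn.neg_one_pow] using h'
  revert hs
  generalize (s : ZMod 3) = t
  revert t
  decide

lemma eventually_lt_of_sq_sub_sq_mul_eq_pow (s c : ℤ) {n : ℕ} (hn : n ≠ 0) (A : ℤ) :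
    ∀ᶠ U : ℤ in atTop, ∀ d, s ^ 2 - c ^ 2 * d = U ^ n → d < A := by
  filter_upwards [eventually_gt_atTop (s ^ 2 - c ^ 2 * A), eventually_ge_atTop 1] with U hU hU_one
    d hd
  have hlt : c ^ 2 * d < c ^ 2 * A := by linarith [le_self_pow₀ hU_one hn]
  exact lt_of_mul_lt_mul_left hlt (sq_nonneg c)

theorem eventually_exists_orderOf_classGroup_eq {n : ℕ} (hn : Odd n) {s : ℤ} (hs : s ≠ 0)
    (c : ℤ) : ∀ᶠ U : ℤ in atTop, Odd U → U ≡ -1 [ZMOD 3 * n * s] →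
      ∀ d, s ^ 2 - c ^ 2 * d = U ^ n → ∃ x : ClassGroup (𝓞 (Qsqrt d)), orderOf x = n := by
  filter_upwards [eventually_gt_atTop (|2 * s| ^ n + |2 * s|),
    eventually_lt_of_sq_sub_sq_mul_eq_pow s c hn.pos.ne' 0] with U hlt hneg hU_odd hU_mod d hd
  have hsqrt : ((d : ℂ) ^ ((1 : ℂ) / 2)) ^ 2 = d := by
    rw [one_div]
    exact Complex.cpow_ofNat_inv_pow _ 2
  have hU_three : U ≡ -1 [ZMOD 3] := (hU_mod.of_mul_right s).of_mul_right n
  have hUn : IsCoprime U n := isCoprime_of_modEq_neg_one ((hU_mod.of_mul_right s).of_mul_left 3)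
  have hUs : IsCoprime U s := isCoprime_of_modEq_neg_one (hU_mod.of_mul_left (3 * n))
  exact exists_orderOf_classGroup_adjoin_eq (hneg d hd)
    (not_three_dvd_of_sq_sub_sq_mul_eq_pow hn hU_three hd) hsqrt hn hs hd hUn
    ((Int.isCoprime_two_right.2 hU_odd).mul_right hUs) hlt

lemma exists_sq_sub_sq_mul_eq_pow {n : ℕ} (hn : Odd n) {m U : ℤ} (hU : U ≡ 1 + 8 * m [ZMOD 16]) :
    ∃ d, (4 * m - 1) ^ 2 - 4 ^ 2 * d = U ^ n := by
  have hU_sq : U ^ 2 ≡ 1 [ZMOD 16] :=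
    (hU.pow 2).trans (Int.modEq_iff_dvd.2 ⟨-(m + 4 * m ^ 2), by ring⟩)
  have hU_pow : U ^ n ≡ (4 * m - 1) ^ 2 [ZMOD 16] :=
    ((pow_modEq_self_of_odd hn hU_sq).trans hU).trans
      (Int.modEq_iff_dvd.2 ⟨m ^ 2 - m, by ring⟩)
  obtain ⟨d, hd⟩ := Int.modEq_iff_dvd.1 hU_pow
  exact ⟨d, by linear_combination hd⟩

theorem infinite_pairs_classGroup_orderOf_general {n : ℕ} (hn : Odd n) (m : ℤ) :
    {d : ℤ | d < 0 ∧ d + m < 0 ∧ (∃ x : ClassGroup (𝓞 (Qsqrt d)), orderOf x = n) ∧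
      (∃ y : ClassGroup (𝓞 (Qsqrt (d + m))), orderOf y = n)}.Infinite := by
  have hs : 4 * m - 1 ≠ 0 := by lia
  have hs' : 4 * m + 1 ≠ 0 := by lia
  have hM : Odd (3 * n * ((4 * m - 1) * (4 * m + 1))) :=
    (Odd.mul (by decide) hn.natCast).mul (.mul ⟨2 * m - 1, by ring⟩ ⟨2 * m, by ring⟩)
  have hM_ne : 3 * n * ((4 * m - 1) * (4 * m + 1)) ≠ 0 := fun h => by simp [h] at hM
  have hcop : IsCoprime (3 * n * ((4 * m - 1) * (4 * m + 1))) 16 :=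
    (Int.isCoprime_two_right.2 hM).pow_right (n := 4)
  refine Set.infinite_of_forall_exists_lt fun A => ?_
  obtain ⟨U, ⟨hU_mod, hU_mod16⟩, hlt, hlt', hclass, hclass'⟩ :=
    ((frequently_modEq_and_modEq hM_ne (by norm_num) hcop (-1) (1 + 8 * m)).and_eventually
      ((eventually_lt_of_sq_sub_sq_mul_eq_pow (4 * m - 1) 4 hn.pos.ne' (min A 0)).and
      ((eventually_lt_of_sq_sub_sq_mul_eq_pow (4 * m + 1) 4 hn.pos.ne' 0).and
      ((eventually_exists_orderOf_classGroup_eq hn hs 4).and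
        (eventually_exists_orderOf_classGroup_eq hn hs' 4))))).exists
  have hU_odd : Odd U := Int.odd_iff.2 (by unfold Int.ModEq at hU_mod16; lia)
  have hU_mod_s : U ≡ -1 [ZMOD 3 * n * (4 * m - 1)] := hU_mod.of_dvd ⟨4 * m + 1, by ring⟩
  have hU_mod_s' : U ≡ -1 [ZMOD 3 * n * (4 * m + 1)] := hU_mod.of_dvd ⟨4 * m - 1, by ring⟩
  obtain ⟨d, hd⟩ := exists_sq_sub_sq_mul_eq_pow hn hU_mod16
  have hd' : (4 * m + 1) ^ 2 - 4 ^ 2 * (d + m) = U ^ n := by linear_combination hd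
  obtain ⟨hdA, hd_neg⟩ := lt_min_iff.1 (hlt d hd)
  exact ⟨d, ⟨hd_neg, hlt' _ hd', hclass hU_odd hU_mod_s d hd, hclass' hU_odd hU_mod_s' _ hd'⟩,
    hdA⟩

/-- For any odd positive integer `n` and any positive integer `m`, there are infinitely
many negative integers `d` such that the ideal class groups of the imaginary quadratic
fields `ℚ(√d)` and `ℚ(√(d + m))` both contain an element of order `n`. -/
theorem infinite_pairs_classGroup_orderOf
    (n m : ℕ) (hn : Odd n) (hnpos : 0 < n) (hm : 0 < m) :
    {d : ℤ | d < 0 ∧ d + m < 0 ∧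
      (∃ x : ClassGroup (NumberField.RingOfIntegers (Qsqrt d)), orderOf x = n) ∧
      (∃ y : ClassGroup (NumberField.RingOfIntegers (Qsqrt (d + m))),
        orderOf y = n)}.Infinite := by
  exact infinite_pairs_classGroup_orderOf_general hn m
end
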